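/- Let I be a finite family of d-DOPs, let C* be a closed parallelogram each of whose four sides lies on a line of L₁, and let OPT ⊆ I be an independent subfamily with cl(P) ⊆ C* for every P ∈ OPT. Then there exist a family OPT' of d-DOPs and a bijection ext : OPT → OPT' such that: (E1) OPT' is independent, cl(Q) ⊆ C* for every Q ∈ OPT', every edge of every Q ∈ OPT' lies on a line of L_{2d}, and every vertex (edge endpoint) of every Q ∈ OPT' belongs to V_{2d}; (E2) P ⊆ ext(P) for every P ∈ OPT; (E3) for every Q ∈ OPT' and every non-degenerate edge e of Q, relint(e) meets ∂Q' for some Q' ∈ OPT' with Q' ≠ Q, or relint(e) meets ∂C*. -/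

import Mathlib

open scoped Classical

noncomputable section

/-- A point of the Euclidean plane. -/
abbrev Pt : Type := ℝ × ℝ

/-- Dot product in the plane. -/
def dot2 (a b : Pt) : ℝ := a.1 * b.1 + a.2 * b.2

/-- Clockwise orthogonal rotation `v^⊥` of a vector. -/
def perp2 (w : Pt) : Pt := (w.2, -w.1)

/-- Cross product (determinant) of two plane vectors. -/
def cross2 (a b : Pt) : ℝ := a.1 * b.2 - a.2 * b.1

/-- The hypotheses on the family of direction-defining vectors `v₁, …, v_d`
(extended to all integer indices by `v_{i+d} = -v_i`, hence `2d`-periodicity):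
`d ≥ 2`, `v 1 = (0,1)`, pairwise linear independence of `v₁, …, v_d`,
`v₂, …, v_d` have negative first coordinate, and `v₂, …, v_d`
are ordered by strictly decreasing slope. -/
def DirOK (d : ℕ) (v : ℤ → Pt) : Prop :=
  2 ≤ d ∧
  v 1 = ((0 : ℝ), (1 : ℝ)) ∧
  (∀ i : ℤ, v (i + (d : ℤ)) = -v i) ∧
  (∀ i j : ℤ, 1 ≤ i → i < j → j ≤ (d : ℤ) → cross2 (v i) (v j) ≠ 0) ∧
  (∀ i : ℤ, 2 ≤ i → i ≤ (d : ℤ) → (v i).1 < 0) ∧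
  (∀ i j : ℤ, 2 ≤ i → i < j → j ≤ (d : ℤ) → (v j).2 / (v j).1 < (v i).2 / (v i).1)

/-- The open polygon `P = {x : ⟨x, v_i^⊥⟩ < p_i for all i ∈ {1,…,2d}}`. -/
def DOPset (d : ℕ) (v : ℤ → Pt) (p : ℤ → ℝ) : Set Pt :=
  {x : Pt | ∀ i ∈ Finset.Icc (1 : ℤ) (2 * (d : ℤ)), dot2 x (perp2 (v i)) < p i}

/-- The edge `e_i(P) = cl(P) ∩ {x : ⟨x, v_i^⊥⟩ = p_i}`. -/
def edgeOf (d : ℕ) (v : ℤ → Pt) (p : ℤ → ℝ) (i : ℤ) : Set Pt :=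
  closure (DOPset d v p) ∩ {x : Pt | dot2 x (perp2 (v i)) = p i}

/-- `p` (a `2d`-periodic family of offsets) defines a `d`-DOP: the corresponding open
set is nonempty and bounded, and every constraint is tight (each edge is nonempty). -/
def IsDOP (d : ℕ) (v : ℤ → Pt) (p : ℤ → ℝ) : Prop :=
  (DOPset d v p).Nonempty ∧
  Bornology.IsBounded (DOPset d v p) ∧
  (∀ i : ℤ, p (i + 2 * (d : ℤ)) = p i) ∧
  ∀ i ∈ Finset.Icc (1 : ℤ) (2 * (d : ℤ)), (edgeOf d v p i).Nonempty

/-- `te` and `he` are the tail and the head of the (possibly degenerate) segment `e`,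
oriented along `v i`:  `e = [te, he]` and `he - te` is a nonnegative multiple of `v i`. -/
def IsTH (v : ℤ → Pt) (i : ℤ) (e : Set Pt) (te he : Pt) : Prop :=
  e = segment ℝ te he ∧ ∃ c : ℝ, 0 ≤ c ∧ he - te = c • v i

/-- The pair (tail, head) of the edge `e_i(P)` (chosen by the characterizing property). -/
def THpair (d : ℕ) (v : ℤ → Pt) (p : ℤ → ℝ) (i : ℤ) : Pt × Pt :=
  if h : ∃ th : Pt × Pt, IsTH v i (edgeOf d v p i) th.1 th.2 then h.choose
  else (0 : Pt × Pt)

/-- The tail `t(e_i(P))` of the edge `e_i(P)`. -/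
def tlPt (d : ℕ) (v : ℤ → Pt) (p : ℤ → ℝ) (i : ℤ) : Pt := (THpair d v p i).1

/-- The head `h(e_i(P))` of the edge `e_i(P)`. -/
def hdPt (d : ℕ) (v : ℤ → Pt) (p : ℤ → ℝ) (i : ℤ) : Pt := (THpair d v p i).2

/-- The relative interior of the edge `e_i(P)`: the segment minus its two endpoints. -/
def relintE (d : ℕ) (v : ℤ → Pt) (p : ℤ → ℝ) (i : ℤ) : Set Pt :=
  segment ℝ (tlPt d v p i) (hdPt d v p i) \ {tlPt d v p i, hdPt d v p i}

/-- A family of `d`-DOPs is independent: members are pairwise distinct (as sets)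
and no two of them meet as open sets. -/
def Indep (d : ℕ) (v : ℤ → Pt) (OPT : Set (ℤ → ℝ)) : Prop :=
  ∀ p ∈ OPT, ∀ q ∈ OPT, p ≠ q →
    DOPset d v p ≠ DOPset d v q ∧ DOPset d v p ∩ DOPset d v q = ∅

/-- `P` sees `P'` with respect to the charging option `(v_i, a)`, where the Boolean
`a = true` stands for the option `h` (head) and `a = false` for `t` (tail):
the edge `e = e_i(P)` is non-degenerate and `(¬a)(e') ∈ relint(e) ∪ {a(e)}`
where `e' = e_{i+d}(P')`. -/
def SeesOpt (d : ℕ) (v : ℤ → Pt) (p p' : ℤ → ℝ) (i : ℤ) (a : Bool) : Prop :=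
  tlPt d v p i ≠ hdPt d v p i ∧
  (if a then tlPt d v p' (i + (d : ℤ)) else hdPt d v p' (i + (d : ℤ))) ∈
    relintE d v p i ∪ {if a then hdPt d v p i else tlPt d v p i}

/-- `P ∈ OPT` is accountable with respect to the charging option `(v_i, a)`. -/
def Accountable (d : ℕ) (v : ℤ → Pt) (OPT : Set (ℤ → ℝ)) (p : ℤ → ℝ) (i : ℤ)
    (a : Bool) : Prop :=
  ∃ p' ∈ OPT, SeesOpt d v p p' i a

/-- Condition (E4): for every `P ∈ OPT` and every non-degenerate edge `e` of `P`,
`relint(e)` meets the boundary of another polygon of `OPT` or the boundary of `C*`. -/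
def E4cond (d : ℕ) (v : ℤ → Pt) (OPT : Set (ℤ → ℝ)) (Cstar : Set Pt) : Prop :=
  ∀ p ∈ OPT, ∀ i ∈ Finset.Icc (1 : ℤ) (2 * (d : ℤ)),
    tlPt d v p i ≠ hdPt d v p i →
    (∃ q ∈ OPT, DOPset d v q ≠ DOPset d v p ∧
      (relintE d v p i ∩ frontier (DOPset d v q)).Nonempty) ∨
    (relintE d v p i ∩ frontier Cstar).Nonempty

/-- A (closed) parallelogram in the plane. -/
def IsParallelogram (C : Set Pt) : Prop :=
  ∃ a u w : Pt, cross2 u w ≠ 0 ∧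
    C = (fun st : ℝ × ℝ => a + st.1 • u + st.2 • w) ''
      {st : ℝ × ℝ | st.1 ∈ Set.Icc (0 : ℝ) 1 ∧ st.2 ∈ Set.Icc (0 : ℝ) 1}

/-- `P` is a corner polygon in `C*`: all of its edges except exactly one are
contained in `∂C*`. -/
def CornerPoly (d : ℕ) (v : ℤ → Pt) (p : ℤ → ℝ) (Cstar : Set Pt) : Prop :=
  ∃ i ∈ Finset.Icc (1 : ℤ) (2 * (d : ℤ)),
    ¬ edgeOf d v p i ⊆ frontier Cstar ∧
    ∀ j ∈ Finset.Icc (1 : ℤ) (2 * (d : ℤ)), j ≠ i → edgeOf d v p j ⊆ frontier Cstar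

/-- `x` is a vertex (an edge endpoint) of the polygon `P`. -/
def VertexOf (d : ℕ) (v : ℤ → Pt) (p : ℤ → ℝ) (x : Pt) : Prop :=
  ∃ i ∈ Finset.Icc (1 : ℤ) (2 * (d : ℤ)), x = tlPt d v p i ∨ x = hdPt d v p i

/-- The line through `a` with direction `w`. -/
def lineThr (a w : Pt) : Set Pt := {x : Pt | ∃ t : ℝ, x = a + t • w}

/-- `L₁`: the lines in directions `v₁, …, v_d` through the vertices of the polygons
of the input family `I`. -/
def LOne (d : ℕ) (v : ℤ → Pt) (I : Set (ℤ → ℝ)) : Set (Set Pt) :=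
  {l : Set Pt | ∃ i : ℤ, 1 ≤ i ∧ i ≤ (d : ℤ) ∧
    ∃ x : Pt, (∃ p ∈ I, VertexOf d v p x) ∧ l = lineThr x (v i)}

/-- The points lying on two non-parallel (hence distinct) lines of `L`. -/
def Vof (L : Set (Set Pt)) : Set Pt :=
  {x : Pt | ∃ l₁ ∈ L, ∃ l₂ ∈ L, l₁ ≠ l₂ ∧ x ∈ l₁ ∧ x ∈ l₂}

/-- The lines in directions `v₁, …, v_d` through the points of `V`. -/
def Lnext (d : ℕ) (v : ℤ → Pt) (V : Set Pt) : Set (Set Pt) :=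
  {l : Set Pt | ∃ i : ℤ, 1 ≤ i ∧ i ≤ (d : ℤ) ∧ ∃ a ∈ V, l = lineThr a (v i)}

/-- The recursively defined families of lines `L_k` (with `L_0 := ∅`). -/
def Lgrid (d : ℕ) (v : ℤ → Pt) (I : Set (ℤ → ℝ)) : ℕ → Set (Set Pt)
  | 0 => ∅
  | 1 => LOne d v I
  | (k + 2) => Lnext d v (Vof (Lgrid d v I (k + 1)))

/-- The grid points `V_k`. -/
def Vgrid (d : ℕ) (v : ℤ → Pt) (I : Set (ℤ → ℝ)) (k : ℕ) : Set Pt :=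
  Vof (Lgrid d v I k)

/-!
Treat the directions one after the other, counterclockwise. In the stage of a direction, take the
polygons in turn and push the edge in that direction outwards as far as possible, until it touches
another polygon or a side of the region. A non-degenerate edge that touches neither could always be
pushed a little further, so by compactness a push ends at a blocked edge, and later pushes unblock
nothing. Edges treated before that have degenerated to a point are pushed along, since they may
become non-degenerate again. To control where they come to rest, a push pauses at the finitely many
offsets of the corners of the other polygons: between two pauses such an edge can only be stopped by
a side of the region or by a non-degenerate edge.

An edge stopped in this way lies on the line of that side or edge, so it creates no new line of the
grid. The pushed edge may also be stopped by a degenerate edge; then it passes through a vertex, and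
the level of its line may exceed the levels reached so far by one. This happens only if the opposite
direction has been treated before, hence not in the first `d` of the `2d` stages. In the end the
non-degenerate edges lie on lines of `L_{d+1}`, and all edges on lines of `L_{d+2}`, where
`d + 2 ≤ 2d`.
-/

/-! ### Periodic indices -/

theorem eq_of_modEq {α : Type*} {f : ℤ → α} {n i j : ℤ} (hf : Function.Periodic f n)
    (h : i ≡ j [ZMOD n]) : f i = f j := by
  obtain ⟨t, rfl⟩ := Int.modEq_iff_add_fac.1 h
  rw [mul_comm]
  exact (hf.int_mul t i).symm

theorem exists_modEq_mem_Ico {n : ℤ} (hn : 0 < n) (a i : ℤ) :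
    ∃ j ∈ Set.Ico a (a + n), j ≡ i [ZMOD n] := by
  refine ⟨a + (i - a) % n, ⟨?_, ?_⟩, ?_⟩
  · linarith [Int.emod_nonneg (i - a) hn.ne']
  · linarith [Int.emod_lt_of_pos (i - a) hn]
  · simpa using (Int.mod_modEq (i - a) n).add_left a

theorem not_modEq_of_lt {n i j : ℤ} (hij : i < j) (hj : j < i + n) : ¬ i ≡ j [ZMOD n] := by
  intro h
  have := Int.le_of_dvd (sub_pos.2 hij) h.dvd
  linarith

theorem modEq_add_of_modEq_of_not_modEq {n i j : ℤ} (h : j ≡ i [ZMOD n])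
    (h2 : ¬ j ≡ i [ZMOD 2 * n]) : j ≡ i + n [ZMOD 2 * n] := by
  obtain ⟨t, rfl⟩ := Int.modEq_iff_add_fac.1 h
  rcases Int.even_or_odd' t with ⟨k, rfl | rfl⟩
  · exact absurd (Int.modEq_iff_add_fac.2 ⟨k, by ring⟩) h2
  · exact Int.modEq_iff_add_fac.2 ⟨k + 1, by ring⟩

/-! ### Directions and offsets -/

/-- The linear functional `x ↦ x × b`, whose level sets are the lines of direction `b`. -/
def crossForm (b : Pt) : Pt →L[ℝ] ℝ :=
  b.2 • ContinuousLinearMap.fst ℝ ℝ ℝ - b.1 • ContinuousLinearMap.snd ℝ ℝ ℝ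

theorem crossForm_apply (b x : Pt) : crossForm b x = cross2 x b := by
  change b.2 * x.1 - b.1 * x.2 = x.1 * b.2 - x.2 * b.1
  ring

/-- The offset `⟨x, w_i^⊥⟩` of the line of direction `w i` through `x`. -/
def offset (w : ℤ → Pt) (i : ℤ) : Pt →L[ℝ] ℝ := crossForm (w i)

theorem offset_apply (w : ℤ → Pt) (i : ℤ) (x : Pt) : offset w i x = cross2 x (w i) :=
  crossForm_apply _ _

theorem offset_self (w : ℤ → Pt) (i : ℤ) : offset w i (w i) = 0 := by
  rw [offset_apply, cross2]; ring

theorem offset_swap (w : ℤ → Pt) (i j : ℤ) : offset w i (w j) = -offset w j (w i) := by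
  simp only [offset_apply, cross2]; ring

theorem offset_add_smul (w : ℤ → Pt) (i : ℤ) (x y : Pt) (t : ℝ) :
    offset w i (x + t • y) = offset w i x + t * offset w i y := by
  rw [map_add, map_smul, smul_eq_mul]

theorem offset_three_term (w : ℤ → Pt) (a b j : ℤ) (x : Pt) :
    offset w b (w a) * offset w j x =
      offset w b (w j) * offset w a x + offset w j (w a) * offset w b x := by
  simp only [offset_apply, cross2]; ring

/-- The intersection point of the lines of offset `p i` and `p (i + 1)`, given by Cramer's rule;
for a tight polygon it is the head of the edge `i` and the tail of the edge `i + 1`. -/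
def corner (w : ℤ → Pt) (p : ℤ → ℝ) (i : ℤ) : Pt :=
  (cross2 (w i) (w (i + 1)))⁻¹ • (p (i + 1) • w i - p i • w (i + 1))

theorem continuous_corner (w : ℤ → Pt) (i : ℤ) : Continuous fun p : ℤ → ℝ => corner w p i := by
  unfold corner
  fun_prop

/-- The open polygon with offsets `p`, constrained in all integer directions. -/
def openPoly (w : ℤ → Pt) (p : ℤ → ℝ) : Set Pt := {x | ∀ i, offset w i x < p i}

/-- The closed polygon with offsets `p`, constrained in all integer directions. -/
def closedPoly (w : ℤ → Pt) (p : ℤ → ℝ) : Set Pt := {x | ∀ i, offset w i x ≤ p i}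

theorem openPoly_subset_closedPoly (w : ℤ → Pt) (p : ℤ → ℝ) : openPoly w p ⊆ closedPoly w p :=
  fun _ hx i => (hx i).le

theorem closedPoly_mono {w : ℤ → Pt} {p q : ℤ → ℝ} (h : p ≤ q) :
    closedPoly w p ⊆ closedPoly w q :=
  fun _ hx i => (hx i).trans (h i)

theorem closedPoly_eq_iInter (w : ℤ → Pt) (p : ℤ → ℝ) :
    closedPoly w p = ⋂ i, {x | offset w i x ≤ p i} := Set.ofPred_forall _

theorem isClosed_closedPoly (w : ℤ → Pt) (p : ℤ → ℝ) : IsClosed (closedPoly w p) := by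
  rw [closedPoly_eq_iInter]
  exact isClosed_iInter fun i => isClosed_le (offset w i).continuous continuous_const

theorem convex_closedPoly (w : ℤ → Pt) (p : ℤ → ℝ) : Convex ℝ (closedPoly w p) := by
  rw [closedPoly_eq_iInter]
  exact convex_iInter fun i => convex_halfSpace_le (offset w i).isLinear _

/-- The points of the edge `i` satisfying all the other constraints strictly. -/
def edgeInterior (d : ℕ) (w : ℤ → Pt) (p : ℤ → ℝ) (i : ℤ) : Set Pt :=
  {x | offset w i x = p i ∧ ∀ j, ¬ j ≡ i [ZMOD 2 * d] → offset w j x < p j}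

/-- The edge `i` is non-degenerate. -/
def Nondeg (w : ℤ → Pt) (p : ℤ → ℝ) (i : ℤ) : Prop := corner w p (i - 1) ≠ corner w p i

/-- A normalised system of `2d` directions: `w i` turns counterclockwise, by less than a straight
angle over fewer than `d` steps, and `w (i + d) = -w i`. -/
structure CcwDirections (d : ℕ) (w : ℤ → Pt) : Prop where
  two_le : 2 ≤ d
  antiperiodic : Function.Antiperiodic w (d : ℤ)
  cross_pos : ∀ i j : ℤ, i < j → j < i + (d : ℤ) → 0 < cross2 (w i) (w j)

namespace CcwDirections
variable {d : ℕ} {w : ℤ → Pt} (hw : CcwDirections d w)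
include hw

theorem periodic : Function.Periodic w (2 * (d : ℤ)) := hw.antiperiodic.periodic_two_mul

theorem offset_pos {i j : ℤ} (hij : i < j) (hj : j < i + d) : 0 < offset w j (w i) := by
  rw [offset_apply]
  exact hw.cross_pos i j hij hj

theorem offset_succ_pos (i : ℤ) : 0 < offset w (i + 1) (w i) := by
  have := hw.two_le
  exact hw.offset_pos (by omega) (by omega)

theorem offset_pred_neg (i : ℤ) : offset w (i - 1) (w i) < 0 := by
  have := hw.offset_succ_pos (i - 1)
  rw [sub_add_cancel] at this
  rw [offset_swap]
  exact neg_neg_of_pos this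

theorem offset_add_d (i : ℤ) (x : Pt) : offset w (i + d) x = -offset w i x := by
  simp only [offset_apply, cross2, hw.antiperiodic i, Prod.fst_neg, Prod.snd_neg]
  ring

theorem offset_neg {i j : ℤ} (hij : i + d < j) (hj : j < i + 2 * d) : offset w j (w i) < 0 := by
  have h := hw.offset_pos (show i < j - d by linarith) (by linarith)
  have e := hw.offset_add_d (j - d) (w i)
  rw [sub_add_cancel] at e
  linarith

theorem offset_congr {i j : ℤ} (h : i ≡ j [ZMOD 2 * d]) : offset w i = offset w j := by
  rw [offset, offset, eq_of_modEq hw.periodic h]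

theorem offset_corner (p : ℤ → ℝ) (i : ℤ) : offset w i (corner w p i) = p i := by
  have h := hw.offset_succ_pos i
  rw [corner, ← offset_apply, map_smul, map_sub, map_smul, map_smul, offset_self,
    offset_swap w i (i + 1)]
  simp only [smul_eq_mul]
  field_simp
  ring

theorem offset_succ_corner (p : ℤ → ℝ) (i : ℤ) : offset w (i + 1) (corner w p i) = p (i + 1) := by
  have h := hw.offset_succ_pos i
  rw [corner, ← offset_apply, map_smul, map_sub, map_smul, map_smul, offset_self]
  simp only [smul_eq_mul]
  field_simp
  ring

theorem offset_corner_pred (p : ℤ → ℝ) (i : ℤ) : offset w i (corner w p (i - 1)) = p i := by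
  simpa only [sub_add_cancel] using hw.offset_succ_corner p (i - 1)

theorem corner_offset (x : Pt) (i : ℤ) : corner w (fun j => offset w j x) i = x := by
  have h : cross2 (w i) (w (i + 1)) ≠ 0 := by
    rw [← offset_apply]; exact (hw.offset_succ_pos i).ne'
  rw [corner, inv_smul_eq_iff₀ h]
  ext <;> simp only [offset_apply, cross2, Prod.smul_fst, Prod.smul_snd, Prod.fst_sub,
    Prod.snd_sub, smul_eq_mul] <;> ring

theorem exists_eq_add_smul {i : ℤ} {x y : Pt} (h : offset w i x = offset w i y) :
    ∃ t : ℝ, x = y + t • w i := by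
  have e := hw.corner_offset (x - y) i
  simp only [corner, map_sub, h, sub_self, zero_smul, sub_zero, smul_smul] at e
  exact ⟨_, sub_eq_iff_eq_add'.1 e.symm⟩

theorem eq_or_eq_neg_of_modEq {i j : ℤ} (h : i ≡ j [ZMOD d]) : w j = w i ∨ w j = -w i := by
  obtain ⟨n, rfl⟩ := Int.modEq_iff_add_fac.1 h
  have e := hw.antiperiodic.add_zsmul_eq (x := i) n
  rw [smul_eq_mul, mul_comm] at e
  rcases Int.units_eq_one_or n.negOnePow with h1 | h1 <;> simp [e, h1]

theorem modEq_of_offset_eq_zero {i j : ℤ} (h : offset w j (w i) = 0) : j ≡ i [ZMOD d] := by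
  have hd : (0 : ℤ) < d := by have := hw.two_le; omega
  obtain ⟨k, ⟨hik, hki⟩, hk⟩ := exists_modEq_mem_Ico hd i j
  rcases hik.eq_or_lt with rfl | hik
  · exact hk.symm
  · have hpos := (hw.offset_pos hik hki).ne'
    rw [offset_apply] at h hpos
    rcases hw.eq_or_eq_neg_of_modEq hk.symm with e | e <;> rw [e] at hpos
    · exact absurd h hpos
    · refine absurd ?_ hpos
      simp only [cross2, Prod.fst_neg, Prod.snd_neg] at h ⊢
      linarith

theorem corner_periodic {p : ℤ → ℝ} (hp : Function.Periodic p (2 * (d : ℤ))) :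
    Function.Periodic (corner w p) (2 * (d : ℤ)) := by
  intro i
  simp only [corner, add_right_comm i (2 * (d : ℤ)) 1, hp _, hw.periodic _]

theorem nondeg_congr {p : ℤ → ℝ} (hp : Function.Periodic p (2 * (d : ℤ))) {i j : ℤ}
    (h : i ≡ j [ZMOD 2 * d]) : Nondeg w p i ↔ Nondeg w p j := by
  rw [Nondeg, Nondeg, eq_of_modEq (hw.corner_periodic hp) h,
    eq_of_modEq (hw.corner_periodic hp) (h.sub_right 1)]

theorem edgeInterior_congr {p : ℤ → ℝ} (hp : Function.Periodic p (2 * (d : ℤ))) {i j : ℤ}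
    (h : i ≡ j [ZMOD 2 * d]) : edgeInterior d w p i = edgeInterior d w p j := by
  ext x
  rw [edgeInterior, edgeInterior, Set.mem_ofPred_eq, Set.mem_ofPred_eq, hw.offset_congr h,
    eq_of_modEq hp h]
  exact and_congr_right fun _ => forall_congr' fun k =>
    imp_congr_left (not_congr ⟨fun hk => hk.trans h, fun hk => hk.trans h.symm⟩)

theorem offset_dir_nonpos_or_nonneg (i j : ℤ) :
    offset w j (w i) ≤ 0 ∨ 0 ≤ offset w j (w (i + 1)) := by
  have hd := hw.two_le
  obtain ⟨k, ⟨hik, hki⟩, hk⟩ := exists_modEq_mem_Ico (show 0 < 2 * (d : ℤ) by omega) i j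
  rw [← hw.offset_congr hk]
  rcases hik.eq_or_lt with rfl | hik
  · exact Or.inl (offset_self w _).le
  rcases (Int.add_one_le_iff.2 hik).eq_or_lt with rfl | hik'
  · exact Or.inr (offset_self w _).ge
  rcases lt_trichotomy k (i + d) with h | rfl | h
  · exact Or.inr (hw.offset_pos hik' (by omega)).le
  · rw [hw.offset_add_d, offset_self, neg_zero]
    exact Or.inl le_rfl
  · exact Or.inl (hw.offset_neg h hki).le

theorem isCompact_closedPoly (r : ℤ → ℝ) : IsCompact (closedPoly w r) := by
  have hc : IsCompact ((fun p => corner w p 0) '' Set.Icc (fun i => -r (i + d)) r) :=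
    isCompact_Icc.image (continuous_corner w 0)
  refine hc.of_isClosed_subset (isClosed_closedPoly w r) fun x hx => ?_
  refine ⟨fun i => offset w i x, ⟨fun i => ?_, hx⟩, hw.corner_offset x 0⟩
  have := hx (i + d)
  rw [hw.offset_add_d] at this
  exact neg_le.1 this

theorem isOpen_openPoly {p : ℤ → ℝ} (hp : Function.Periodic p (2 * (d : ℤ))) :
    IsOpen (openPoly w p) := by
  have hd := hw.two_le
  have e : openPoly w p = ⋂ i ∈ Set.Ico (0 : ℤ) (0 + 2 * d), {x | offset w i x < p i} := by
    ext x
    simp only [openPoly, Set.mem_ofPred_eq, Set.mem_iInter]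
    refine ⟨fun h i _ => h i, fun h i => ?_⟩
    obtain ⟨j, hj, hji⟩ := exists_modEq_mem_Ico (show 0 < 2 * (d : ℤ) by omega) 0 i
    rw [← eq_of_modEq hp hji, ← hw.offset_congr hji]
    exact h j hj
  rw [e]
  exact (Set.finite_Ico _ _).isOpen_biInter fun i _ =>
    isOpen_lt (offset w i).continuous continuous_const

theorem exists_mem_offset_lt {U : Set Pt} (hU : IsOpen U) {z : Pt} (hz : z ∈ U) (i : ℤ) :
    ∃ y ∈ U, offset w i z < offset w i y := by
  have hc : Filter.Tendsto (fun t : ℝ => z + t • w (i - 1)) (nhdsWithin 0 (Set.Ioi 0))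
      (nhds z) := by
    have : Continuous fun t : ℝ => z + t • w (i - 1) := by fun_prop
    simpa using (this.tendsto 0).mono_left nhdsWithin_le_nhds
  obtain ⟨t, ht, ht0⟩ := ((hc.eventually (hU.mem_nhds hz)).and self_mem_nhdsWithin).exists
  refine ⟨_, ht, ?_⟩
  have h := hw.offset_succ_pos (i - 1)
  rw [sub_add_cancel] at h
  rw [offset_add_smul]
  exact lt_add_of_pos_right _ (mul_pos ht0 h)

end CcwDirections

/-! ### Tight polygons -/

theorem segment_add_smul {E : Type*} [AddCommGroup E] [Module ℝ E] (x v : E) {t : ℝ} (ht : 0 ≤ t) :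
    segment ℝ x (x + t • v) = (fun s : ℝ => x + s • v) '' Set.Icc 0 t := by
  have h : (fun s : ℝ => x + s • v) = AffineMap.lineMap (k := ℝ) x (x + v) := by
    ext s
    simp [AffineMap.lineMap_apply, add_comm]
  rw [← segment_eq_Icc ht, h, image_segment]
  simp [AffineMap.lineMap_apply, add_comm]

/-- Offsets of a nonempty polygon all of whose consecutive boundary lines meet in a point of its
closure, i.e. all of whose constraints are tight. -/
structure TightPolygon (d : ℕ) (w : ℤ → Pt) (p : ℤ → ℝ) : Prop where
  periodic : Function.Periodic p (2 * (d : ℤ))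
  nonempty : (openPoly w p).Nonempty
  corner_mem : ∀ i, corner w p i ∈ closedPoly w p

namespace TightPolygon
variable {d : ℕ} {w : ℤ → Pt} (hw : CcwDirections d w) {p : ℤ → ℝ}
include hw

theorem of_forall_exists_mem (hper : Function.Periodic p (2 * (d : ℤ)))
    (hne : (openPoly w p).Nonempty) (hedge : ∀ i, ∃ x ∈ closedPoly w p, offset w i x = p i) :
    TightPolygon d w p := by
  choose a ha hai using hedge
  refine ⟨hper, hne, fun i j => ?_⟩
  have hc := hw.offset_succ_pos i
  obtain ⟨α, hα⟩ := hw.exists_eq_add_smul (i := i) (x := corner w p i) (y := a i)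
    (by rw [hw.offset_corner, hai])
  obtain ⟨β, hβ⟩ := hw.exists_eq_add_smul (i := i + 1) (x := corner w p i) (y := a (i + 1))
    (by rw [hw.offset_succ_corner, hai])
  have hα0 : 0 ≤ α := by
    have h1 := hw.offset_succ_corner p i
    rw [hα, offset_add_smul] at h1
    exact nonneg_of_mul_nonneg_left (by linarith [ha i (i + 1)]) hc
  have hβ0 : β ≤ 0 := by
    have h1 := hw.offset_corner p i
    rw [hβ, offset_add_smul, offset_swap] at h1
    refine nonpos_of_mul_nonpos_left ?_ hc
    linarith [ha (i + 1) i]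
  rcases hw.offset_dir_nonpos_or_nonneg i j with h | h
  · rw [hα, offset_add_smul]
    linarith [ha i j, mul_nonpos_of_nonneg_of_nonpos hα0 h]
  · rw [hβ, offset_add_smul]
    linarith [ha (i + 1) j, mul_nonpos_of_nonpos_of_nonneg hβ0 h]

theorem exists_tightening (hp : TightPolygon d w p) {r : ℤ → ℝ} (hpr : p ≤ r) :
    ∃ q, TightPolygon d w q ∧ p ≤ q ∧ q ≤ r ∧ closedPoly w r ⊆ closedPoly w q := by
  have hne : (closedPoly w r).Nonempty := ⟨_, closedPoly_mono hpr (hp.corner_mem 0)⟩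
  have hmax : ∀ i, ∃ a ∈ closedPoly w r, ∀ x ∈ closedPoly w r, offset w i x ≤ offset w i a :=
    fun i => (hw.isCompact_closedPoly r).exists_isMaxOn hne (offset w i).continuous.continuousOn
  choose a ha hmax using hmax
  have hpq : ∀ i, p i ≤ offset w i (a i) := fun i => by
    simpa only [hw.offset_corner] using hmax i _ (closedPoly_mono hpr (hp.corner_mem i))
  refine ⟨fun i => offset w i (a i), of_forall_exists_mem hw (fun i => ?_) ?_ fun i => ?_,
    hpq, fun i => ha i i, fun x hx i => hmax i x hx⟩
  · have e : offset w (i + 2 * d) = offset w i := hw.offset_congr (by simp)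
    apply le_antisymm
    · simpa only [e] using hmax i _ (ha (i + 2 * d))
    · simpa only [e] using hmax (i + 2 * d) _ (ha i)
  · obtain ⟨x, hx⟩ := hp.nonempty
    exact ⟨x, fun i => (hx i).trans_le (hpq i)⟩
  · exact ⟨a i, fun j => hmax j _ (ha i), rfl⟩

variable (hp : TightPolygon d w p)
include hp

theorem width_pos (i : ℤ) : 0 < p i + p (i + d) := by
  obtain ⟨x, hx⟩ := hp.nonempty
  have h1 := hx i
  have h2 := hx (i + d)
  rw [hw.offset_add_d] at h2
  linarith

theorem exists_corner_eq (i : ℤ) :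
    ∃ t : ℝ, 0 ≤ t ∧ corner w p i = corner w p (i - 1) + t • w i := by
  obtain ⟨t, ht⟩ := hw.exists_eq_add_smul (i := i) (x := corner w p i) (y := corner w p (i - 1))
    (by rw [hw.offset_corner, hw.offset_corner_pred])
  refine ⟨t, ?_, ht⟩
  have h := hw.offset_succ_corner p i
  rw [ht, offset_add_smul] at h
  exact nonneg_of_mul_nonneg_left (by linarith [hp.corner_mem (i - 1) (i + 1)])
    (hw.offset_succ_pos i)

theorem exists_pos_corner_eq {i : ℤ} (h : Nondeg w p i) :
    ∃ t : ℝ, 0 < t ∧ corner w p i = corner w p (i - 1) + t • w i := by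
  obtain ⟨t, ht0, ht⟩ := hp.exists_corner_eq hw i
  refine ⟨t, ht0.lt_of_ne' ?_, ht⟩
  rintro rfl
  exact h (by rw [ht, zero_smul, add_zero])

theorem mem_segment_corner {i : ℤ} {y : Pt} (hy : y ∈ closedPoly w p) (hyi : offset w i y = p i) :
    y ∈ segment ℝ (corner w p (i - 1)) (corner w p i) := by
  obtain ⟨t, ht0, ht⟩ := hp.exists_corner_eq hw i
  obtain ⟨s, rfl⟩ := hw.exists_eq_add_smul (i := i) (x := y) (y := corner w p (i - 1))
    (by rw [hyi, hw.offset_corner_pred])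
  rw [ht, segment_add_smul _ _ ht0]
  have hpred := hy (i - 1)
  have hsucc := hy (i + 1)
  rw [offset_add_smul, hw.offset_corner] at hpred
  rw [← hw.offset_succ_corner p i, ht, offset_add_smul, offset_add_smul] at hsucc
  refine ⟨s, ⟨?_, ?_⟩, rfl⟩
  · exact nonneg_of_mul_nonpos_left (by linarith) (hw.offset_pred_neg i)
  · exact le_of_mul_le_mul_right (by linarith) (hw.offset_succ_pos i)

theorem eq_corner_of_not_nondeg {i : ℤ} (h : ¬ Nondeg w p i) {y : Pt} (hy : y ∈ closedPoly w p)
    (hyi : offset w i y = p i) : y = corner w p i := by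
  have := hp.mem_segment_corner hw hy hyi
  rwa [not_not.1 h, segment_same] at this

theorem mem_edgeInterior_of_adjacent_lt {i : ℤ} {x : Pt} (hi : offset w i x = p i)
    (hpred : offset w (i - 1) x < p (i - 1)) (hsucc : offset w (i + 1) x < p (i + 1)) :
    x ∈ edgeInterior d w p i := by
  refine ⟨hi, fun j hj => ?_⟩
  obtain ⟨t, -, ht⟩ := hp.exists_corner_eq hw i
  obtain ⟨s, rfl⟩ := hw.exists_eq_add_smul (i := i) (x := x) (y := corner w p (i - 1))
    (by rw [hi, hw.offset_corner_pred])
  have htail := hp.corner_mem (i - 1) j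
  have hhead := hp.corner_mem i j
  have hs0 : 0 < s := by
    rw [offset_add_smul, hw.offset_corner] at hpred
    exact pos_of_mul_neg_left (by linarith) (hw.offset_pred_neg i).le
  have hst : s < t := by
    rw [← hw.offset_succ_corner p i, ht, offset_add_smul, offset_add_smul] at hsucc
    exact lt_of_mul_lt_mul_right (by linarith) (hw.offset_succ_pos i).le
  rw [ht, offset_add_smul] at hhead
  rcases lt_trichotomy (offset w j (w i)) 0 with h | h | h
  · rw [offset_add_smul]
    linarith [mul_neg_of_pos_of_neg hs0 h]
  · have hji := modEq_add_of_modEq_of_not_modEq (hw.modEq_of_offset_eq_zero h) hj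
    rw [hw.offset_congr hji, hw.offset_add_d, hi, eq_of_modEq hp.periodic hji]
    linarith [hp.width_pos hw i]
  · rw [offset_add_smul]
    linarith [mul_lt_mul_of_pos_right hst h]

theorem edgeInterior_nonempty {i : ℤ} (h : Nondeg w p i) : (edgeInterior d w p i).Nonempty := by
  obtain ⟨t, ht0, ht⟩ := hp.exists_pos_corner_eq hw h
  refine ⟨corner w p (i - 1) + (t / 2) • w i, hp.mem_edgeInterior_of_adjacent_lt hw ?_ ?_ ?_⟩
  · rw [offset_add_smul, hw.offset_corner_pred, offset_self, mul_zero, add_zero]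
  · rw [offset_add_smul, hw.offset_corner]
    linarith [mul_neg_of_pos_of_neg (half_pos ht0) (hw.offset_pred_neg i)]
  · rw [← hw.offset_succ_corner p i, ht, offset_add_smul, offset_add_smul]
    linarith [mul_pos (half_pos ht0) (hw.offset_succ_pos i)]

theorem edgeInterior_subset_closedPoly (i : ℤ) : edgeInterior d w p i ⊆ closedPoly w p := by
  intro x hx j
  by_cases h : j ≡ i [ZMOD 2 * d]
  · rw [hw.offset_congr h, eq_of_modEq hp.periodic h]
    exact hx.1.le
  · exact (hx.2 j h).le

omit hp in
theorem ne_corner_of_mem_edgeInterior {i : ℤ} {x : Pt} (hx : x ∈ edgeInterior d w p i) :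
    x ≠ corner w p (i - 1) ∧ x ≠ corner w p i := by
  have hd := hw.two_le
  constructor <;> rintro rfl
  · refine (hx.2 (i - 1) (not_modEq_of_lt (by omega) (by omega))).ne ?_
    exact hw.offset_corner p (i - 1)
  · refine (hx.2 (i + 1) fun h => not_modEq_of_lt ?_ ?_ h.symm).ne ?_
    · omega
    · omega
    · exact hw.offset_succ_corner p i

omit hw hp in
theorem corner_eq_of_forall_not_nondeg {a b : ℤ} (hab : a ≤ b)
    (h : ∀ i, a < i → i ≤ b → ¬ Nondeg w p i) : corner w p a = corner w p b := by
  induction b, hab using Int.leInduction with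
  | base => rfl
  | succ b hab ih =>
    rw [ih fun i h1 h2 => h i h1 (by omega)]
    simpa only [Nondeg, add_sub_cancel_right, not_not] using h (b + 1) (by omega) le_rfl

theorem exists_nondeg_mem_Ioo (a : ℤ) : ∃ i ∈ Set.Ioo a (a + d), Nondeg w p i := by
  by_contra! h
  have hd := hw.two_le
  have hcorner := corner_eq_of_forall_not_nondeg (w := w) (p := p) (show a ≤ a + d - 1 by omega)
    fun i h1 h2 => h i ⟨h1, by omega⟩
  have hright := hw.offset_corner_pred p (a + d)
  rw [← hcorner, hw.offset_add_d, hw.offset_corner] at hright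
  linarith [hp.width_pos hw a]

theorem exists_nondeg_neighbors {j : ℤ} (h : ¬ Nondeg w p j) :
    ∃ a b : ℤ, a < j ∧ j < b ∧ b < a + d ∧ Nondeg w p a ∧ Nondeg w p b ∧
      offset w a (corner w p j) = p a ∧ offset w b (corner w p j) = p b := by
  obtain ⟨a₀, ⟨-, ha₀⟩, hna₀⟩ := hp.exists_nondeg_mem_Ioo hw (j - d)
  obtain ⟨b₀, ⟨hb₀, -⟩, hnb₀⟩ := hp.exists_nondeg_mem_Ioo hw j
  obtain ⟨a, ⟨haj, hna⟩, hamax⟩ := Int.exists_greatest_of_bdd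
    (P := fun a => a < j ∧ Nondeg w p a) ⟨j, fun z hz => hz.1.le⟩ ⟨a₀, by omega, hna₀⟩
  obtain ⟨b, ⟨hjb, hnb⟩, hbmin⟩ := Int.exists_least_of_bdd
    (P := fun b => j < b ∧ Nondeg w p b) ⟨j, fun z hz => hz.1.le⟩ ⟨b₀, hb₀, hnb₀⟩
  have hdeg : ∀ i, a < i → i < b → ¬ Nondeg w p i := by
    intro i h1 h2 h3
    rcases lt_trichotomy i j with h4 | rfl | h4
    · exact (hamax i ⟨h4, h3⟩).not_gt h1
    · exact h h3
    · exact (hbmin i ⟨h4, h3⟩).not_gt h2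
  obtain ⟨i, ⟨hai, hia⟩, hi⟩ := hp.exists_nondeg_mem_Ioo hw a
  refine ⟨a, b, haj, hjb, ?_, hna, hnb, ?_, ?_⟩
  · by_contra! hba
    exact hdeg i hai (by omega) hi
  · rw [← corner_eq_of_forall_not_nondeg haj.le fun i h1 h2 => hdeg i h1 (by omega),
      hw.offset_corner]
  · rw [corner_eq_of_forall_not_nondeg (Int.le_sub_one_of_lt hjb)
      fun i h1 h2 => hdeg i (by omega) (by omega), hw.offset_corner_pred]

theorem exists_nondeg_pos_combination {j : ℤ} (h : ¬ Nondeg w p j) :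
    ∃ a b : ℤ, a < j ∧ j < b ∧ b < a + d ∧ Nondeg w p a ∧ Nondeg w p b ∧ ∃ α β : ℝ, 0 < α ∧ 0 < β ∧
      (∀ x, offset w j x = α * offset w a x + β * offset w b x) ∧ p j = α * p a + β * p b := by
  obtain ⟨a, b, haj, hjb, hba, hna, hnb, ea, eb⟩ := hp.exists_nondeg_neighbors hw h
  have hab := hw.offset_pos (haj.trans hjb) hba
  have key : ∀ x, offset w j x = offset w b (w j) / offset w b (w a) * offset w a x
      + offset w j (w a) / offset w b (w a) * offset w b x := by
    intro x
    have := offset_three_term w a b j x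
    field_simp
    linarith
  refine ⟨a, b, haj, hjb, hba, hna, hnb, _, _, div_pos (hw.offset_pos hjb (by omega)) hab,
    div_pos (hw.offset_pos haj (by omega)) hab, key, ?_⟩
  simpa only [ea, eb, hw.offset_corner] using key (corner w p j)

end TightPolygon

/-! ### Separation and contact -/

/-- Two polygons are separated if a line parallel to one of the directions separates them; for
tight polygons this means that their interiors are disjoint. -/
def Separated (d : ℕ) (p q : ℤ → ℝ) : Prop := ∃ i, p i + q (i + d) ≤ 0

namespace Separated
variable {d : ℕ} {p q : ℤ → ℝ}

theorem symm (hp : Function.Periodic p (2 * (d : ℤ))) (h : Separated d p q) :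
    Separated d q p := by
  obtain ⟨i, hi⟩ := h
  refine ⟨i + d, ?_⟩
  rw [add_assoc, ← two_mul, hp i]
  linarith

theorem exists_mem_Ico (hd : 0 < d) (hp : Function.Periodic p (2 * (d : ℤ)))
    (hq : Function.Periodic q (2 * (d : ℤ))) (h : Separated d p q) :
    ∃ i ∈ Set.Ico (0 : ℤ) (0 + 2 * d), p i + q (i + d) ≤ 0 := by
  obtain ⟨i, hi⟩ := h
  obtain ⟨j, hj, hji⟩ := exists_modEq_mem_Ico (n := 2 * (d : ℤ)) (by omega) 0 i
  exact ⟨j, hj, by rwa [eq_of_modEq hp hji, eq_of_modEq hq (hji.add_right _)]⟩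

theorem mono (h : Separated d p q) {p' q' : ℤ → ℝ} (hp : p' ≤ p) (hq : q' ≤ q) :
    Separated d p' q' := by
  obtain ⟨i, hi⟩ := h
  exact ⟨i, (add_le_add (hp i) (hq _)).trans hi⟩

variable {w : ℤ → Pt} (hw : CcwDirections d w)
include hw

theorem disjoint (h : Separated d p q) : Disjoint (openPoly w p) (closedPoly w q) := by
  obtain ⟨i, hi⟩ := h
  refine Set.disjoint_left.2 fun x hx hxq => ?_
  have h1 := hx i
  have h2 := hxq (i + d)
  rw [hw.offset_add_d] at h2
  linarith

theorem add_eq_zero_of_mem_edgeInterior (h : Separated d p q)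
    (hp : Function.Periodic p (2 * (d : ℤ))) (hq : Function.Periodic q (2 * (d : ℤ))) {m : ℤ}
    {x : Pt} (hx : x ∈ edgeInterior d w p m) (hxq : x ∈ closedPoly w q) :
    p m + q (m + d) = 0 := by
  obtain ⟨i, hi⟩ := h
  have h1 := hxq (i + d)
  rw [hw.offset_add_d] at h1
  by_cases him : i ≡ m [ZMOD 2 * d]
  · rw [hw.offset_congr him, hx.1, eq_of_modEq hq (him.add_right _)] at h1
    rw [eq_of_modEq hp him, eq_of_modEq hq (him.add_right _)] at hi
    linarith
  · linarith [hx.2 i him]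

end Separated

namespace TightPolygon
variable {d : ℕ} {w : ℤ → Pt} (hw : CcwDirections d w) {p q : ℤ → ℝ}
  (hp : TightPolygon d w p) (hq : TightPolygon d w q)
include hw hp hq

theorem exists_mem_edgeInterior_mem_closedPoly {m : ℤ} (hm : Nondeg w p m)
    (h0 : p m + q (m + d) = 0) (hpred : 0 < p (m - 1) + q (m - 1 + d))
    (hsucc : 0 < p (m + 1) + q (m + 1 + d)) :
    ∃ x ∈ edgeInterior d w p m, x ∈ closedPoly w q := by
  have hline : ∀ {x}, offset w (m + d) x = q (m + d) → offset w m x = p m := fun hx => by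
    rw [hw.offset_add_d] at hx
    linarith
  have hhead := hline (hw.offset_corner q (m + d))
  have htail := hline (hw.offset_corner_pred q (m + d))
  have hhead' : offset w (m + 1) (corner w q (m + d)) < p (m + 1) := by
    have h := hw.offset_succ_corner q (m + d)
    rw [add_right_comm, hw.offset_add_d] at h
    linarith
  have htail' : offset w (m - 1) (corner w q (m + d - 1)) < p (m - 1) := by
    have h := hw.offset_corner q (m + d - 1)
    rw [add_sub_right_comm, hw.offset_add_d] at h
    rw [add_sub_right_comm]
    linarith
  by_cases h1 : offset w (m - 1) (corner w q (m + d)) < p (m - 1)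
  · exact ⟨_, hp.mem_edgeInterior_of_adjacent_lt hw hhead h1 hhead', hq.corner_mem _⟩
  by_cases h2 : offset w (m + 1) (corner w q (m + d - 1)) < p (m + 1)
  · exact ⟨_, hp.mem_edgeInterior_of_adjacent_lt hw htail htail' h2, hq.corner_mem _⟩
  -- Now the edge of `q` covers the edge of `p`, so any point of the latter will do.
  obtain ⟨z, hz⟩ := hp.edgeInterior_nonempty hw hm
  have hd := hw.two_le
  have hz1 := hz.2 (m - 1) (not_modEq_of_lt (by omega) (by omega))
  have hz2 := hz.2 (m + 1) fun h => not_modEq_of_lt (by omega) (by omega) h.symm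
  obtain ⟨s, hs⟩ := hw.exists_eq_add_smul (hz.1.trans hhead.symm)
  obtain ⟨t, ht⟩ := hw.exists_eq_add_smul (hz.1.trans htail.symm)
  have hs0 : 0 ≤ s := by
    rw [hs, offset_add_smul] at hz1
    exact (pos_of_mul_neg_left (by linarith) (hw.offset_pred_neg m).le).le
  have ht0 : t ≤ 0 := by
    rw [ht, offset_add_smul] at hz2
    exact nonpos_of_mul_nonpos_left (by linarith) (hw.offset_succ_pos m)
  refine ⟨z, hz, fun j => ?_⟩
  rcases le_total (offset w j (w m)) 0 with h | h
  · rw [hs, offset_add_smul]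
    linarith [hq.corner_mem (m + d) j, mul_nonpos_of_nonneg_of_nonpos hs0 h]
  · rw [ht, offset_add_smul]
    linarith [hq.corner_mem (m + d - 1) j, mul_nonpos_of_nonpos_of_nonneg ht0 h]

theorem exists_separator (hpq : Separated d p q) {m : ℤ} (hm : Nondeg w p m)
    (hcontact : ∀ x ∈ edgeInterior d w p m, x ∉ closedPoly w q) :
    ∃ i, p i + q (i + d) ≤ 0 ∧ (i ≡ m [ZMOD 2 * d] → p i + q (i + d) < 0) := by
  by_contra! h
  obtain ⟨i, hi⟩ := hpq
  obtain ⟨him, h0⟩ := h i hi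
  have hpos : ∀ j, ¬ j ≡ m [ZMOD 2 * d] → 0 < p j + q (j + d) := fun j hj =>
    lt_of_not_ge fun hle => hj (h j hle).1
  rw [eq_of_modEq hp.periodic him, eq_of_modEq hq.periodic (him.add_right _)] at hi h0
  have hd := hw.two_le
  obtain ⟨x, hx, hxq⟩ := hp.exists_mem_edgeInterior_mem_closedPoly hw hq hm (hi.antisymm h0)
    (hpos _ (not_modEq_of_lt (by omega) (by omega)))
    (hpos _ fun h => not_modEq_of_lt (by omega) (by omega) h.symm)
  exact hcontact x hx hxq

end TightPolygon

/-! ### Obstacles -/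

/-- The offsets `p` with those of index congruent to `m` modulo `2 * d` increased by `δ`. -/
def raise (d : ℕ) (m : ℤ) (δ : ℝ) (p : ℤ → ℝ) : ℤ → ℝ :=
  fun i => if i ≡ m [ZMOD 2 * d] then p i + δ else p i

section
variable {d : ℕ} {m i : ℤ} {δ : ℝ} {p : ℤ → ℝ}

theorem raise_of_modEq (h : i ≡ m [ZMOD 2 * d]) : raise d m δ p i = p i + δ := if_pos h

theorem raise_of_not_modEq (h : ¬ i ≡ m [ZMOD 2 * d]) : raise d m δ p i = p i := if_neg h

theorem le_raise (hδ : 0 ≤ δ) : p ≤ raise d m δ p := by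
  intro i
  by_cases h : i ≡ m [ZMOD 2 * d]
  · rw [raise_of_modEq h]
    exact le_add_of_nonneg_right hδ
  · rw [raise_of_not_modEq h]

theorem periodic_raise (hp : Function.Periodic p (2 * (d : ℤ))) :
    Function.Periodic (raise d m δ p) (2 * (d : ℤ)) := by
  intro i
  simp only [raise, hp i, Int.add_modulus_modEq_iff]

theorem eventually_raise_le {c : ℝ} (hle : p i ≤ c) (hlt : i ≡ m [ZMOD 2 * d] → p i < c) :
    ∀ᶠ δ in nhdsWithin 0 (Set.Ioi 0), raise d m δ p i ≤ c := by
  by_cases h : i ≡ m [ZMOD 2 * d]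
  · filter_upwards [Ioc_mem_nhdsGT (sub_pos.2 (hlt h))] with δ hδ
    rw [raise_of_modEq h]
    linarith [hδ.2]
  · exact Filter.Eventually.of_forall fun δ => by rwa [raise_of_not_modEq h]

theorem edgeInterior_subset_openPoly_raise {w : ℤ → Pt} (hw : CcwDirections d w)
    (hp : Function.Periodic p (2 * (d : ℤ))) (hδ : 0 < δ) :
    edgeInterior d w p m ⊆ openPoly w (raise d m δ p) := by
  intro x hx j
  by_cases h : j ≡ m [ZMOD 2 * d]
  · rw [raise_of_modEq h, hw.offset_congr h, hx.1, eq_of_modEq hp h]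
    exact lt_add_of_pos_right _ hδ
  · rw [raise_of_not_modEq h]
    exact hx.2 j h

end

/-- A polygon in the presence of obstacles: polygons `Q` that it must not meet and walls `H`, where
`(i, c) ∈ H` stands for the half-plane `offset w i ≤ c` that it must not leave. -/
structure Admissible (d : ℕ) (w : ℤ → Pt) (Q : Set (ℤ → ℝ)) (H : Set (ℤ × ℝ)) (p : ℤ → ℝ) :
    Prop where
  tight : TightPolygon d w p
  separated : ∀ q ∈ Q, Separated d p q
  le_wall : ∀ h ∈ H, p h.1 ≤ h.2

/-- Finitely many obstacles that confine the admissible polygons to a bounded region. -/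
structure Obstacles (d : ℕ) (w : ℤ → Pt) (Q : Set (ℤ → ℝ)) (H : Set (ℤ × ℝ)) : Prop where
  finite : Q.Finite
  tight : ∀ q ∈ Q, TightPolygon d w q
  finite_walls : H.Finite
  bddAbove : BddAbove {p | Admissible d w Q H p}

/-- The edge `i` of `p` lies on a wall. -/
def OnWall (d : ℕ) (H : Set (ℤ × ℝ)) (p : ℤ → ℝ) (i : ℤ) : Prop :=
  ∃ h ∈ H, h.1 ≡ i [ZMOD 2 * d] ∧ p h.1 = h.2

/-- The edge `i` of `p` cannot be pushed outwards: its relative interior touches one of the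
polygons `Q`, or it lies on a wall. -/
def Blocked (d : ℕ) (w : ℤ → Pt) (Q : Set (ℤ → ℝ)) (H : Set (ℤ × ℝ)) (p : ℤ → ℝ) (i : ℤ) : Prop :=
  (∃ q ∈ Q, ∃ x ∈ edgeInterior d w p i, x ∈ closedPoly w q) ∨ OnWall d H p i

/-- The edge `i` of `p` lies on the line of a non-degenerate opposite edge of one of the polygons
`Q`, or on a wall, so that its offset is one that occurs already. -/
def StronglyBlocked (d : ℕ) (w : ℤ → Pt) (Q : Set (ℤ → ℝ)) (H : Set (ℤ × ℝ)) (p : ℤ → ℝ)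
    (i : ℤ) : Prop :=
  (∃ q ∈ Q, Nondeg w q (i + d) ∧ p i + q (i + d) = 0) ∨ OnWall d H p i

section
variable {d : ℕ} {w : ℤ → Pt} {Q : Set (ℤ → ℝ)} {H : Set (ℤ × ℝ)} {p s : ℤ → ℝ} {i j : ℤ}

theorem edgeInterior_mono (h : p ≤ s) (hi : s i = p i) :
    edgeInterior d w p i ⊆ edgeInterior d w s i :=
  fun _ hx => ⟨hx.1.trans hi.symm, fun j hj => (hx.2 j hj).trans_le (h j)⟩

theorem Blocked.mono (hp : Function.Periodic p (2 * (d : ℤ)))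
    (hs : Function.Periodic s (2 * (d : ℤ))) (h : p ≤ s) (hi : s i = p i)
    (hb : Blocked d w Q H p i) : Blocked d w Q H s i := by
  rcases hb with ⟨q, hq, x, hx, hxq⟩ | ⟨c, hc, hci, hpc⟩
  · exact .inl ⟨q, hq, x, edgeInterior_mono h hi hx, hxq⟩
  · exact .inr ⟨c, hc, hci, by rw [← hpc, eq_of_modEq hs hci, eq_of_modEq hp hci, hi]⟩

theorem Blocked.congr (hw : CcwDirections d w) (hp : Function.Periodic p (2 * (d : ℤ)))
    (hij : i ≡ j [ZMOD 2 * d]) (hb : Blocked d w Q H p i) : Blocked d w Q H p j := by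
  rcases hb with ⟨q, hq, x, hx, hxq⟩ | ⟨c, hc, hci, hpc⟩
  · exact .inl ⟨q, hq, x, by rwa [← hw.edgeInterior_congr hp hij], hxq⟩
  · exact .inr ⟨c, hc, hci.trans hij, hpc⟩

end

/-! ### Pushing edges outwards -/

section
variable {d : ℕ} {w : ℤ → Pt} (hw : CcwDirections d w) {Q : Set (ℤ → ℝ)} {H : Set (ℤ × ℝ)}
  (hO : Obstacles d w Q H)
include hw hO

theorem Admissible.exists_lt_of_not_blocked {p : ℤ → ℝ} (hp : Admissible d w Q H p) {m : ℤ}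
    (hm : Nondeg w p m) (hb : ¬ Blocked d w Q H p m) {c : ℝ} (hc : p m < c) :
    ∃ s, Admissible d w Q H s ∧ p ≤ s ∧ p m < s m ∧ s m ≤ c ∧
      ∀ i, ¬ i ≡ m [ZMOD 2 * d] → s i = p i := by
  obtain ⟨hcontact, hwall⟩ := not_or.1 hb
  simp only [OnWall] at hwall
  push Not at hcontact hwall
  have hsep : ∀ᶠ δ in nhdsWithin 0 (Set.Ioi 0), ∀ q ∈ Q, Separated d (raise d m δ p) q := by
    refine (Filter.eventually_all_finite hO.finite).2 fun q hq => ?_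
    obtain ⟨i, hi, him⟩ :=
      hp.tight.exists_separator hw (hO.tight q hq) (hp.separated q hq) hm (hcontact q hq)
    have hle : p i ≤ -q (i + d) := by linarith
    filter_upwards [eventually_raise_le hle fun h => by linarith [him h]] with δ hδ
    exact ⟨i, by linarith⟩
  have hle : ∀ᶠ δ in nhdsWithin 0 (Set.Ioi 0), ∀ h ∈ H, raise d m δ p h.1 ≤ h.2 :=
    (Filter.eventually_all_finite hO.finite_walls).2 fun h hh =>
      eventually_raise_le (hp.le_wall h hh) fun hm => (hp.le_wall h hh).lt_of_ne (hwall h hh hm)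
  have hlec : ∀ᶠ δ in nhdsWithin 0 (Set.Ioi 0), raise d m δ p m ≤ c :=
    eventually_raise_le hc.le fun _ => hc
  obtain ⟨δ, hδsep, hδle, hδc, hδ⟩ :=
    (hsep.and (hle.and (hlec.and self_mem_nhdsWithin))).exists
  obtain ⟨s, hs, hps, hsr, hrs⟩ := hp.tight.exists_tightening hw (le_raise (le_of_lt hδ))
  obtain ⟨z, hz⟩ := hp.tight.edgeInterior_nonempty hw hm
  obtain ⟨y, hy, hzy⟩ := hw.exists_mem_offset_lt
    (hw.isOpen_openPoly (periodic_raise hp.tight.periodic))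
    (edgeInterior_subset_openPoly_raise hw hp.tight.periodic hδ hz) m
  refine ⟨s, ⟨hs, fun q hq => (hδsep q hq).mono hsr le_rfl, fun h hh => (hsr _).trans (hδle h hh)⟩,
    hps, ?_, (hsr m).trans hδc, fun i hi => ((hsr i).trans_eq (raise_of_not_modEq hi)).antisymm
      (hps i)⟩
  exact (hz.1.symm.trans_lt hzy).trans_le (hrs (openPoly_subset_closedPoly _ _ hy) m)

theorem isClosed_admissible {p : ℤ → ℝ} (hp : (openPoly w p).Nonempty) :
    IsClosed {s | Admissible d w Q H s ∧ p ≤ s} := by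
  have hd := hw.two_le
  have hc : ∀ i, Continuous fun s : ℤ → ℝ => s i := continuous_apply
  have heq : {s | Admissible d w Q H s ∧ p ≤ s} =
      {s | Function.Periodic s (2 * (d : ℤ))} ∩ (⋂ i, ⋂ j, {s | offset w j (corner w s i) ≤ s j}) ∩
      (⋂ q ∈ Q, ⋃ i ∈ Set.Ico (0 : ℤ) (0 + 2 * d), {s | s i + q (i + d) ≤ 0}) ∩
      (⋂ h ∈ H, {s | s h.1 ≤ h.2}) ∩ Set.Ici p := by
    ext s
    simp only [Set.mem_inter_iff, Set.mem_iInter, Set.mem_iUnion, Set.mem_ofPred_eq, Set.mem_Ici,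
      exists_prop]
    constructor
    · rintro ⟨⟨ht, hsep, hwall⟩, hps⟩
      exact ⟨⟨⟨⟨ht.periodic, ht.corner_mem⟩, fun q hq =>
        (hsep q hq).exists_mem_Ico (by omega) ht.periodic (hO.tight q hq).periodic⟩, hwall⟩, hps⟩
    · rintro ⟨⟨⟨⟨hper, hcorner⟩, hsep⟩, hwall⟩, hps⟩
      obtain ⟨x, hx⟩ := hp
      exact ⟨⟨⟨hper, ⟨x, fun i => (hx i).trans_le (hps i)⟩, hcorner⟩,
        fun q hq => (hsep q hq).imp fun _ h => h.2, hwall⟩, hps⟩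
  rw [heq]
  refine (((IsClosed.inter ?_ ?_).inter ?_).inter ?_).inter isClosed_Ici
  · simp only [Function.Periodic, Set.ofPred_forall]
    exact isClosed_iInter fun i => isClosed_eq (hc _) (hc _)
  · exact isClosed_iInter fun i => isClosed_iInter fun j =>
      isClosed_le ((offset w j).continuous.comp (continuous_corner w i)) (hc j)
  · exact isClosed_biInter fun q _ => (Set.finite_Ico _ _).isClosed_biUnion fun i _ =>
      isClosed_le ((hc i).add continuous_const) continuous_const
  · exact isClosed_biInter fun h _ => isClosed_le (hc _) continuous_const

theorem isCompact_admissible {p : ℤ → ℝ} (hp : (openPoly w p).Nonempty) :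
    IsCompact {s | Admissible d w Q H s ∧ p ≤ s} := by
  obtain ⟨B, hB⟩ := hO.bddAbove
  exact isCompact_Icc.of_isClosed_subset (isClosed_admissible hw hO hp)
    fun s hs => ⟨hs.2, hB hs.1⟩

theorem Admissible.exists_blocked_or_eq {p : ℤ → ℝ} (hp : Admissible d w Q H p) {U : ℤ → Prop}
    (hU : Function.Periodic U (2 * (d : ℤ))) {k : ℤ} {c : ℝ} (hc : p k ≤ c) :
    ∃ s, Admissible d w Q H s ∧ p ≤ s ∧ s k ≤ c ∧ (∀ i, ¬ U i → s i = p i) ∧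
      ∀ m, U m → Nondeg w s m → Blocked d w Q H s m ∨ m ≡ k [ZMOD 2 * d] ∧ s k = c := by
  have hd := hw.two_le
  let J := Finset.Ico (0 : ℤ) (0 + 2 * d)
  have hclosed : IsClosed ({s : ℤ → ℝ | s k ≤ c} ∩ ⋂ i ∈ {i | ¬ U i}, {s | s i = p i}) :=
    (isClosed_le (continuous_apply k) continuous_const).inter <| isClosed_biInter fun i _ =>
      isClosed_eq (continuous_apply i) continuous_const
  obtain ⟨s, ⟨⟨hs, hps⟩, hsc, hfix⟩, hmax⟩ :=
    ((isCompact_admissible hw hO hp.tight.nonempty).inter_right hclosed).exists_isMaxOn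
      ⟨p, ⟨hp, le_rfl⟩, hc, Set.mem_iInter₂.2 fun _ _ => rfl⟩
      (f := fun s : ℤ → ℝ => ∑ i ∈ J, s i)
      (continuous_finsetSum _ fun i _ => continuous_apply i).continuousOn
  simp only [Set.mem_iInter, Set.mem_ofPred_eq] at hfix
  refine ⟨s, hs, hps, hsc, hfix, fun m hUm hm => ?_⟩
  by_contra! hcon
  obtain ⟨hb, hmk⟩ := hcon
  -- A further push of the edge `m` would contradict the maximality of the sum of the offsets.
  obtain ⟨b, hmb, hbc⟩ : ∃ b, s m < b ∧ (m ≡ k [ZMOD 2 * d] → b ≤ c) := by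
    by_cases h : m ≡ k [ZMOD 2 * d]
    · rw [eq_of_modEq hs.tight.periodic h]
      exact ⟨c, hsc.lt_of_ne (hmk h), fun _ => le_rfl⟩
    · exact ⟨s m + 1, lt_add_one _, fun h' => absurd h' h⟩
  obtain ⟨t, ht, hst, hlt, htb, htfix⟩ := hs.exists_lt_of_not_blocked hw hO hm hb hmb
  have htc : t k ≤ c := by
    by_cases h : k ≡ m [ZMOD 2 * d]
    · rw [eq_of_modEq ht.tight.periodic h]
      exact htb.trans (hbc h.symm)
    · rwa [htfix k h]
  have htU : ∀ i, ¬ U i → t i = p i := fun i hi => by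
    rw [htfix i fun h => hi (by rwa [eq_of_modEq hU h]), hfix i hi]
  obtain ⟨j, hj, hjm⟩ := exists_modEq_mem_Ico (n := 2 * (d : ℤ)) (by omega) 0 m
  have hsum : ∑ i ∈ J, s i < ∑ i ∈ J, t i := by
    refine Finset.sum_lt_sum (fun i _ => hst i) ⟨j, Finset.mem_Ico.2 hj, ?_⟩
    rwa [eq_of_modEq hs.tight.periodic hjm, eq_of_modEq ht.tight.periodic hjm]
  exact hsum.not_ge (hmax ⟨⟨ht, hps.trans hst⟩, htc, Set.mem_iInter₂.2 htU⟩)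

end

section
variable {d : ℕ} {w : ℤ → Pt} (hw : CcwDirections d w) {p : ℤ → ℝ} (hp : TightPolygon d w p)
include hw hp

theorem TightPolygon.mem_openPoly_of_nondeg {y : Pt}
    (hy : ∀ i, Nondeg w p i → offset w i y < p i) : y ∈ openPoly w p := by
  intro j
  by_cases hj : Nondeg w p j
  · exact hy j hj
  obtain ⟨a, b, -, -, -, ha, hb, α, β, hα, hβ, hx, hpj⟩ := hp.exists_nondeg_pos_combination hw hj
  rw [hx, hpj]
  exact add_lt_add (mul_lt_mul_of_pos_left (hy a ha) hα) (mul_lt_mul_of_pos_left (hy b hb) hβ)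

theorem TightPolygon.mem_edgeInterior_of_nondeg {k : ℤ} {y : Pt} (hk : offset w k y = p k)
    (hy : ∀ i, Nondeg w p i → ¬ i ≡ k [ZMOD 2 * d] → offset w i y < p i) :
    y ∈ edgeInterior d w p k := by
  have hle : ∀ i, Nondeg w p i → offset w i y ≤ p i := by
    intro i hi
    by_cases h : i ≡ k [ZMOD 2 * d]
    · rw [hw.offset_congr h, hk, eq_of_modEq hp.periodic h]
    · exact (hy i hi h).le
  refine ⟨hk, fun j hjk => ?_⟩
  by_cases hj : Nondeg w p j
  · exact hy j hj hjk
  obtain ⟨a, b, haj, hjb, hba, ha, hb, α, β, hα, hβ, hx, hpj⟩ :=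
    hp.exists_nondeg_pos_combination hw hj
  rw [hx, hpj]
  by_cases hak : a ≡ k [ZMOD 2 * d]
  · have hbk : ¬ b ≡ k [ZMOD 2 * d] := fun h =>
      not_modEq_of_lt (haj.trans hjb) (by omega) (hak.trans h.symm)
    exact add_lt_add_of_le_of_lt (mul_le_mul_of_nonneg_left (hle a ha) hα.le)
      (mul_lt_mul_of_pos_left (hy b hb hbk) hβ)
  · exact add_lt_add_of_lt_of_le (mul_lt_mul_of_pos_left (hy a ha hak) hα)
      (mul_le_mul_of_nonneg_left (hle b hb) hβ.le)

theorem TightPolygon.not_nondeg_of_eq {s : ℤ → ℝ} (hs : TightPolygon d w s) (hps : p ≤ s) {m k : ℤ}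
    (hmk : m ≡ k + d [ZMOD 2 * d]) (hm : ¬ Nondeg w p m)
    (hfix : ∀ i, Nondeg w p i → ¬ i ≡ k [ZMOD 2 * d] → s i = p i) : ¬ Nondeg w s m := by
  intro h
  obtain ⟨a, b, ham, hmb, hba, ha, hb, α, β, hα, hβ, hx, hpm⟩ :=
    hp.exists_nondeg_pos_combination hw hm
  have hne : ∀ i, m < i + d → i + d < m + 2 * d → ¬ i ≡ k [ZMOD 2 * d] := fun i h1 h2 hik =>
    not_modEq_of_lt h1 h2 (hmk.trans (hik.symm.add_right _))
  obtain ⟨z, hz⟩ := hs.edgeInterior_nonempty hw h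
  have hza := hz.2 a (not_modEq_of_lt ham (by omega))
  have hzb := hz.2 b fun h => not_modEq_of_lt hmb (by omega) h.symm
  rw [hfix a ha (hne a (by omega) (by omega))] at hza
  rw [hfix b hb (hne b (by omega) (by omega))] at hzb
  have hzm := hz.1
  rw [hx] at hzm
  linarith [hps m, mul_lt_mul_of_pos_left hza hα, mul_lt_mul_of_pos_left hzb hβ]

end

section
variable {d : ℕ} {w : ℤ → Pt} (hw : CcwDirections d w) {Q : Set (ℤ → ℝ)} {H : Set (ℤ × ℝ)}
  {p s : ℤ → ℝ} {k : ℤ}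
include hw

theorem Admissible.lt_offset_of_not_blocked (hp : Admissible d w Q H p)
    (hb : ¬ Blocked d w Q H p k) {q : ℤ → ℝ} (hq : q ∈ Q) {y : Pt} (hyq : y ∈ closedPoly w q)
    (hy : ∀ i, Nondeg w p i → ¬ i ≡ k [ZMOD 2 * d] → offset w i y < p i) :
    p k < offset w k y := by
  rcases lt_trichotomy (p k) (offset w k y) with h | h | h
  · exact h
  · exact absurd (.inl ⟨q, hq, y, hp.tight.mem_edgeInterior_of_nondeg hw h.symm hy, hyq⟩) hb
  · refine absurd hyq (Set.disjoint_left.1 ((hp.separated q hq).disjoint hw) ?_)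
    refine hp.tight.mem_openPoly_of_nondeg hw fun i hi => ?_
    by_cases hik : i ≡ k [ZMOD 2 * d]
    · rwa [hw.offset_congr hik, eq_of_modEq hp.tight.periodic hik]
    · exact hy i hi hik

-- A polygon touched only at a vertex `y` would have `offset w k y` strictly between `p k` and `c`.
theorem Admissible.stronglyBlocked_of_blocked (hO : Obstacles d w Q H) (hp : Admissible d w Q H p)
    (hs : Admissible d w Q H s) (hb : ¬ Blocked d w Q H p k) {c : ℝ} (hsc : s k ≤ c)
    (hc : ∀ q ∈ Q, ∀ i, p k < offset w k (corner w q i) → c ≤ offset w k (corner w q i))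
    (hfix : ∀ i, Nondeg w p i → ¬ i ≡ k [ZMOD 2 * d] → s i = p i) {m : ℤ}
    (hmk : ¬ m ≡ k [ZMOD 2 * d]) (hm : ¬ Nondeg w p m) (hbm : Blocked d w Q H s m) :
    StronglyBlocked d w Q H s m := by
  rcases hbm with ⟨q, hq, y, hy, hyq⟩ | hwall
  swap
  · exact .inr hwall
  have htq := hO.tight q hq
  have h0 := (hs.separated q hq).add_eq_zero_of_mem_edgeInterior hw hs.tight.periodic htq.periodic
    hy hyq
  refine .inl ⟨q, hq, ?_, h0⟩
  by_contra hdeg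
  have hyc : y = corner w q (m + d) := htq.eq_corner_of_not_nondeg hw hdeg hyq (by
    rw [hw.offset_add_d, hy.1]
    linarith)
  have hlt : p k < offset w k y := hp.lt_offset_of_not_blocked hw hb hq hyq fun i hi hik => by
    rw [← hfix i hi hik]
    exact hy.2 i fun him => hm ((hw.nondeg_congr hp.tight.periodic him).1 hi)
  have hyk : offset w k y < s k := hy.2 k fun h => hmk h.symm
  rw [hyc] at hlt hyk
  exact (hc q hq _ hlt).not_gt (hyk.trans_le hsc)

end

/-- The invariant maintained while the edge `k` of `p` is being pushed: among the edges satisfying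
`A`, those already treated, the non-degenerate ones are blocked, and the offsets of all edges other
than `k`, except for the treated degenerate ones, satisfy `G`. -/
structure PushInvariant (d : ℕ) (w : ℤ → Pt) (Q : Set (ℤ → ℝ)) (H : Set (ℤ × ℝ)) (A : ℤ → Prop)
    (G : ℤ → ℝ → Prop) (k : ℤ) (p : ℤ → ℝ) : Prop where
  admissible : Admissible d w Q H p
  blocked : ∀ i, A i → Nondeg w p i → Blocked d w Q H p i
  good : ∀ i, ¬ i ≡ k [ZMOD 2 * d] → (Nondeg w p i ∨ ¬ A i) → G i (p i)

namespace PushInvariant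
variable {d : ℕ} {w : ℤ → Pt} (hw : CcwDirections d w) {Q : Set (ℤ → ℝ)} {H : Set (ℤ × ℝ)}
  (hO : Obstacles d w Q H) {A : ℤ → Prop} (hA : Function.Periodic A (2 * (d : ℤ)))
  {G : ℤ → ℝ → Prop} {k : ℤ} (hk : ¬ A k)
  (hG : ∀ s, Admissible d w Q H s → ∀ i, ¬ i ≡ k [ZMOD 2 * d] → ¬ i ≡ k + d [ZMOD 2 * d] →
    StronglyBlocked d w Q H s i → G i (s i))
include hw hO hA hk hG

theorem exists_push_until {p : ℤ → ℝ} (hp : PushInvariant d w Q H A G k p)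
    (hb : ¬ Blocked d w Q H p k) {c : ℝ} (hpc : p k ≤ c)
    (hc : ∀ q ∈ Q, ∀ i, p k < offset w k (corner w q i) → c ≤ offset w k (corner w q i)) :
    ∃ s, p ≤ s ∧ PushInvariant d w Q H A G k s ∧
      (Nondeg w s k → Blocked d w Q H s k ∨ s k = c) := by
  have hper := hp.admissible.tight.periodic
  let U : ℤ → Prop := fun i => i ≡ k [ZMOD 2 * d] ∨ (A i ∧ ¬ Nondeg w p i)
  have hU : Function.Periodic U (2 * (d : ℤ)) := fun i => by
    have h : i + 2 * (d : ℤ) ≡ i [ZMOD 2 * d] := Int.add_modulus_modEq_iff.2 rfl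
    simp only [U, Int.add_modulus_modEq_iff, hA i, hw.nondeg_congr hper h]
  obtain ⟨s, hs, hps, hsc, hfix, hblocked⟩ := hp.admissible.exists_blocked_or_eq hw hO hU hpc
  have hfix' : ∀ i, ¬ i ≡ k [ZMOD 2 * d] → (Nondeg w p i ∨ ¬ A i) → s i = p i := fun i hik h =>
    hfix i (by simp only [U]; tauto)
  have hnew : ∀ i, ¬ i ≡ k [ZMOD 2 * d] → A i → ¬ Nondeg w p i → Nondeg w s i →
      Blocked d w Q H s i := fun i hik hAi hpi hsi =>
    (hblocked i (.inr ⟨hAi, hpi⟩) hsi).resolve_right fun h => hik h.1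
  refine ⟨s, hps, ⟨hs, fun i hAi hsi => ?_, fun i hik h => ?_⟩, fun h => ?_⟩
  · have hik : ¬ i ≡ k [ZMOD 2 * d] := fun h => hk (by rwa [← eq_of_modEq hA h])
    by_cases hpi : Nondeg w p i
    · exact (hp.blocked i hAi hpi).mono hper hs.tight.periodic hps (hfix' i hik (.inl hpi))
    · exact hnew i hik hAi hpi hsi
  · by_cases h' : Nondeg w p i ∨ ¬ A i
    · rw [hfix' i hik h']
      exact hp.good i hik h'
    · obtain ⟨hpi, hAi⟩ : ¬ Nondeg w p i ∧ A i := by tauto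
      have hsi : Nondeg w s i := h.resolve_right (not_not.2 hAi)
      refine hG s hs i hik (fun hikd => ?_) ?_
      · exact hp.admissible.tight.not_nondeg_of_eq hw hs.tight hps hikd hpi
          (fun j hj hjk => hfix' j hjk (.inl hj)) hsi
      · exact hp.admissible.stronglyBlocked_of_blocked hw hO hs hb hsc hc
          (fun j hj hjk => hfix' j hjk (.inl hj)) hik hpi (hnew i hik hAi hpi hsi)
  · exact (hblocked k (.inl rfl) h).imp_right And.right

theorem exists_push {E : Finset ℝ} (hE : ∀ q ∈ Q, ∀ i, offset w k (corner w q i) ∈ E)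
    (hbound : ∃ e ∈ E, ∀ s, Admissible d w Q H s → s k < e) {p : ℤ → ℝ}
    (hp : PushInvariant d w Q H A G k p) :
    ∃ s, p ≤ s ∧ PushInvariant d w Q H A G k s ∧ (Nondeg w s k → Blocked d w Q H s k) := by
  induction hn : (E.filter fun e => p k < e).card using Nat.strong_induction_on generalizing p with
  | _ n ih =>
  by_cases hb : Blocked d w Q H p k
  · exact ⟨p, le_rfl, hp, fun _ => hb⟩
  obtain ⟨e, he, hlt⟩ := hbound
  have hne : (E.filter fun e => p k < e).Nonempty :=
    ⟨e, Finset.mem_filter.2 ⟨he, hlt p hp.admissible⟩⟩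
  obtain ⟨c, hc, hmin⟩ := Finset.exists_min_image _ id hne
  have hpc := (Finset.mem_filter.1 hc).2
  obtain ⟨s, hps, hs, hsk⟩ := hp.exists_push_until hw hO hA hk hG hb hpc.le fun q hq i h =>
    hmin _ (Finset.mem_filter.2 ⟨hE q hq i, h⟩)
  by_cases hsc : s k = c
  · have hcard : (E.filter fun e => s k < e).card < n := by
      rw [← hn]
      refine Finset.card_lt_card (Finset.ssubset_iff_subset_ne.2 ⟨?_, fun h => ?_⟩)
      · exact Finset.monotone_filter_right _ fun e _ h => (hps k).trans_lt h
      · rw [← h, ← hsc] at hc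
        exact lt_irrefl _ (Finset.mem_filter.1 hc).2
    obtain ⟨t, hst, ht⟩ := ih _ hcard hs rfl
    exact ⟨t, hps.trans hst, ht⟩
  · exact ⟨s, hps, hs, fun h => (hsk h).resolve_right hsc⟩

end PushInvariant

theorem Obstacles.exists_finset_events {d : ℕ} {w : ℤ → Pt} (hw : CcwDirections d w)
    {Q : Set (ℤ → ℝ)} {H : Set (ℤ × ℝ)} (hO : Obstacles d w Q H) (k : ℤ) :
    ∃ E : Finset ℝ, (∀ q ∈ Q, ∀ i, offset w k (corner w q i) ∈ E) ∧
      ∃ e ∈ E, ∀ s, Admissible d w Q H s → s k < e := by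
  have hd := hw.two_le
  obtain ⟨B, hB⟩ := hO.bddAbove
  let f : (ℤ → ℝ) × ℤ → ℝ := fun x => offset w k (corner w x.1 x.2)
  have hfin := (hO.finite.prod (Set.finite_Ico (0 : ℤ) (0 + 2 * d))).image f
  refine ⟨insert (B k + 1) hfin.toFinset, fun q hq i => ?_, _, Finset.mem_insert_self _ _,
    fun s hs => (hB hs k).trans_lt (lt_add_one _)⟩
  obtain ⟨j, hj, hji⟩ := exists_modEq_mem_Ico (n := 2 * (d : ℤ)) (by omega) 0 i
  refine Finset.mem_insert_of_mem (hfin.mem_toFinset.2 ⟨(q, j), ⟨hq, hj⟩, ?_⟩)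
  simp only [f, eq_of_modEq (hw.corner_periodic (hO.tight q hq).periodic) hji]

/-! ### Levels -/

/-- An abstraction of the grids `L_M`: `Lv M i x` says that the line `offset w i = x` belongs to
`L_M`. -/
structure LevelSystem (d : ℕ) (w : ℤ → Pt) (H : Set (ℤ × ℝ)) (Lv : ℕ → ℤ → ℝ → Prop) : Prop where
  congr : ∀ {M i j x}, i ≡ j [ZMOD 2 * d] → Lv M i x → Lv M j x
  neg : ∀ {M i x}, Lv M i x → Lv M (i + d) (-x)
  succ : ∀ {M i x}, 1 ≤ M → Lv M i x → Lv (M + 1) i x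
  meet : ∀ {M a b x}, 1 ≤ M → ¬ a ≡ b [ZMOD d] → Lv M a (offset w a x) → Lv M b (offset w b x) →
    ∀ i, Lv (M + 1) i (offset w i x)
  wall : ∀ h ∈ H, Lv 1 h.1 h.2

namespace LevelSystem
variable {d : ℕ} {w : ℤ → Pt} {H : Set (ℤ × ℝ)} {Lv : ℕ → ℤ → ℝ → Prop}
  (hL : LevelSystem d w H Lv)
include hL

theorem mono {M M' : ℕ} (hM : 1 ≤ M) (h : M ≤ M') {i : ℤ} {x : ℝ} (hx : Lv M i x) :
    Lv M' i x := by
  induction M', h using Nat.le_induction with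
  | base => exact hx
  | succ n hn ih => exact hL.succ (hM.trans hn) ih

theorem of_add_eq_zero {M : ℕ} {i : ℤ} {x y : ℝ} (hy : Lv M (i + d) y) (h : x + y = 0) :
    Lv M i x := by
  rw [eq_neg_of_add_eq_zero_left h]
  exact hL.congr (by rw [add_assoc, ← two_mul]; exact Int.add_modulus_modEq_iff.2 rfl) (hL.neg hy)

theorem of_onWall {p : ℤ → ℝ} (hp : Function.Periodic p (2 * (d : ℤ))) {M : ℕ} (hM : 1 ≤ M)
    {i : ℤ} (h : OnWall d H p i) : Lv M i (p i) := by
  obtain ⟨c, hc, hci, hpc⟩ := h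
  rw [← eq_of_modEq hp hci, hpc]
  exact hL.mono le_rfl hM (hL.congr hci (hL.wall c hc))

variable (hw : CcwDirections d w)
include hw

theorem corner_of_not_nondeg {p : ℤ → ℝ} (hp : TightPolygon d w p) {M : ℕ} (hM : 1 ≤ M) {j k : ℤ}
    (hjk : j ≡ k + d [ZMOD 2 * d]) (hj : ¬ Nondeg w p j)
    (h : ∀ i, Nondeg w p i → ¬ i ≡ k [ZMOD 2 * d] → Lv M i (p i)) (i : ℤ) :
    Lv (M + 1) i (offset w i (corner w p j)) := by
  obtain ⟨a, b, haj, hjb, hba, ha, hb, ea, eb⟩ := hp.exists_nondeg_neighbors hw hj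
  have hne : ∀ i, j < i + d → i + d < j + 2 * d → ¬ i ≡ k [ZMOD 2 * d] := fun i h1 h2 hik =>
    not_modEq_of_lt h1 h2 (hjk.trans (hik.symm.add_right _))
  refine hL.meet hM (a := a) (b := b) (not_modEq_of_lt (haj.trans hjb) hba) ?_ ?_ i
  · rw [ea]
    exact h a ha (hne a (by omega) (by omega))
  · rw [eb]
    exact h b hb (hne b (by omega) (by omega))

theorem of_blocked {Q : Set (ℤ → ℝ)} (hQ : ∀ q ∈ Q, TightPolygon d w q) {p : ℤ → ℝ}
    (hp : Admissible d w Q H p) {A : ℤ → Prop} {M M' : ℕ} {k : ℤ} (hM : 1 ≤ M) (hMM : M ≤ M')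
    (hM' : A (k + d) → M + 1 ≤ M')
    (hlev : ∀ q ∈ Q, ∀ i, ¬ i ≡ k [ZMOD 2 * d] → (Nondeg w q i ∨ ¬ A i) → Lv M i (q i))
    (hb : Blocked d w Q H p k) : Lv M' k (p k) := by
  have hd := hw.two_le
  have hkd : ¬ k + d ≡ k [ZMOD 2 * d] := fun h =>
    not_modEq_of_lt (i := k) (j := k + d) (by omega) (by omega) h.symm
  rcases hb with ⟨q, hq, x, hx, hxq⟩ | hwall
  swap
  · exact hL.of_onWall hp.tight.periodic (hM.trans hMM) hwall
  have h0 := (hp.separated q hq).add_eq_zero_of_mem_edgeInterior hw hp.tight.periodic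
    (hQ q hq).periodic hx hxq
  by_cases hq' : Nondeg w q (k + d) ∨ ¬ A (k + d)
  · exact hL.mono hM hMM (hL.of_add_eq_zero (hlev q hq _ hkd hq') h0)
  · rw [not_or, not_not] at hq'
    have hcorner := hL.corner_of_not_nondeg hw (hQ q hq) hM rfl hq'.1
      (fun i hi hik => hlev q hq i hik (.inl hi)) (k + d)
    rw [hw.offset_corner] at hcorner
    exact hL.mono (by omega) (hM' hq'.2) (hL.of_add_eq_zero hcorner h0)

end LevelSystem

/-! ### Maximal extension of a family of polygons -/

/-- The members of the family `c` other than `c a`. -/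
def others {ι : Type*} (c : ι → ℤ → ℝ) (a : ι) : Set (ℤ → ℝ) := c '' {a}ᶜ

/-- The invariant of the extension process once the edges satisfying `A` have been treated: the
treated non-degenerate edges are blocked, and all edges except for the treated degenerate ones have
level at most `M`. -/
structure StageInvariant {ι : Type*} (d : ℕ) (w : ℤ → Pt) (H : Set (ℤ × ℝ))
    (Lv : ℕ → ℤ → ℝ → Prop) (A : ℤ → Prop) (M : ℕ) (c : ι → ℤ → ℝ) : Prop where
  admissible : ∀ a, Admissible d w (others c a) H (c a)
  blocked : ∀ a i, A i → Nondeg w (c a) i → Blocked d w (others c a) H (c a) i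
  level : ∀ a i, (Nondeg w (c a) i ∨ ¬ A i) → Lv M i (c a i)

/-- The invariant within the stage that treats the edges `k`, once this has been done for the
polygons in `S`. -/
structure RoundInvariant {ι : Type*} (d : ℕ) (w : ℤ → Pt) (H : Set (ℤ × ℝ))
    (Lv : ℕ → ℤ → ℝ → Prop) (A : ℤ → Prop) (M M' : ℕ) (k : ℤ) (S : Finset ι) (c : ι → ℤ → ℝ) :
    Prop where
  push : ∀ a, PushInvariant d w (others c a) H A (Lv M) k (c a)
  blocked : ∀ a ∈ S, Nondeg w (c a) k → Blocked d w (others c a) H (c a) k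
  level : ∀ a, Nondeg w (c a) k → Lv M' k (c a k)

section
variable {ι : Type*} {d : ℕ} {w : ℤ → Pt} {H : Set (ℤ × ℝ)} {c : ι → ℤ → ℝ} {a b : ι} {s : ℤ → ℝ}

theorem others_update_self : others (Function.update c a s) a = others c a :=
  Set.image_congr fun _ hb => Function.update_of_ne hb _ _

theorem exists_mem_others_update (hs : c a ≤ s) {q : ℤ → ℝ} (hq : q ∈ others c b) :
    ∃ q' ∈ others (Function.update c a s) b, q ≤ q' := by
  obtain ⟨e, he, rfl⟩ := hq
  exact ⟨_, ⟨e, he, rfl⟩, le_update_self_iff.2 hs e⟩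

theorem Admissible.update (hs : Admissible d w (others c a) H s)
    (hc : Admissible d w (others c b) H (c b)) (hba : b ≠ a) :
    Admissible d w (others (Function.update c a s) b) H (c b) := by
  refine ⟨hc.tight, ?_, hc.le_wall⟩
  rintro _ ⟨e, he, rfl⟩
  by_cases hea : e = a
  · rw [hea, Function.update_self]
    exact (hs.separated _ ⟨b, hba, rfl⟩).symm hs.tight.periodic
  · rw [Function.update_of_ne hea]
    exact hc.separated _ ⟨e, he, rfl⟩

theorem Blocked.update {p : ℤ → ℝ} {i : ℤ} (hs : c a ≤ s) (h : Blocked d w (others c b) H p i) :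
    Blocked d w (others (Function.update c a s) b) H p i := by
  refine h.imp_left ?_
  rintro ⟨q, hq, x, hx, hxq⟩
  obtain ⟨q', hq', hle⟩ := exists_mem_others_update hs hq
  exact ⟨q', hq', x, hx, closedPoly_mono hle hxq⟩

end

section
variable {ι : Type*} [Finite ι] {d : ℕ} {w : ℤ → Pt} (hw : CcwDirections d w) {H : Set (ℤ × ℝ)}
  (hH : H.Finite) (hbdd : BddAbove {p | TightPolygon d w p ∧ ∀ h ∈ H, p h.1 ≤ h.2})
  {Lv : ℕ → ℤ → ℝ → Prop} (hL : LevelSystem d w H Lv) {A : ℤ → Prop} {M M' : ℕ} {k : ℤ}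
  {c : ι → ℤ → ℝ}

include hH hbdd in
theorem obstacles_others (hc : ∀ a, TightPolygon d w (c a)) (a : ι) :
    Obstacles d w (others c a) H where
  finite := (Set.toFinite _).image _
  tight := by
    rintro _ ⟨b, -, rfl⟩
    exact hc b
  finite_walls := hH
  bddAbove := hbdd.mono fun _ hp => And.intro hp.tight hp.le_wall

variable (hA : Function.Periodic A (2 * (d : ℤ))) (hk : ¬ A k) (hM : 1 ≤ M) (hMM : M ≤ M')
  (hM' : A (k + d) → M + 1 ≤ M')
include hw hH hbdd hL hA hk hM hMM hM'

theorem RoundInvariant.exists_insert {S : Finset ι} (hc : RoundInvariant d w H Lv A M M' k S c)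
    (a : ι) : ∃ c', c ≤ c' ∧ RoundInvariant d w H Lv A M M' k (insert a S) c' := by
  have hO := obstacles_others hH hbdd (fun b => (hc.push b).admissible.tight) a
  have hlev : ∀ q ∈ others c a, ∀ i, ¬ i ≡ k [ZMOD 2 * d] → (Nondeg w q i ∨ ¬ A i) →
      Lv M i (q i) := by
    rintro _ ⟨b, -, rfl⟩
    exact (hc.push b).good
  have hgood : ∀ s, Admissible d w (others c a) H s → ∀ i, ¬ i ≡ k [ZMOD 2 * d] →
      ¬ i ≡ k + d [ZMOD 2 * d] → StronglyBlocked d w (others c a) H s i → Lv M i (s i) := by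
    rintro s hs i - hikd (⟨q, hq, hnd, h0⟩ | hwall)
    · refine hL.of_add_eq_zero (hlev q hq _ (fun h => hikd ?_) (.inl hnd)) h0
      have h' := h.add_right d
      rwa [add_assoc, ← two_mul, Int.add_modulus_modEq_iff] at h'
    · exact hL.of_onWall hs.tight.periodic hM hwall
  obtain ⟨E, hE, hbound⟩ := hO.exists_finset_events hw k
  obtain ⟨s, hps, hs, hsb⟩ := (hc.push a).exists_push hw hO hA hk hgood hE hbound
  refine ⟨Function.update c a s, le_update_self_iff.2 hps, fun b => ?_, fun b hbS => ?_,
    fun b => ?_⟩ <;> by_cases hb : b = a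
  · subst hb
    rwa [others_update_self, Function.update_self]
  · rw [Function.update_of_ne hb]
    exact ⟨hs.admissible.update (hc.push b).admissible hb,
      fun i hi hn => ((hc.push b).blocked i hi hn).update hps, (hc.push b).good⟩
  · subst hb
    rwa [others_update_self, Function.update_self]
  · rw [Function.update_of_ne hb]
    exact fun hn => (hc.blocked b (Finset.mem_of_mem_insert_of_ne hbS hb) hn).update hps
  · subst hb
    rw [Function.update_self]
    exact fun hn => hL.of_blocked hw hO.tight hs.admissible hM hMM hM' hlev (hsb hn)
  · rw [Function.update_of_ne hb]
    exact hc.level b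

theorem StageInvariant.exists_next (hc : StageInvariant d w H Lv A M c) :
    ∃ c', c ≤ c' ∧ StageInvariant d w H Lv (fun i => A i ∨ i ≡ k [ZMOD 2 * d]) M' c' := by
  cases nonempty_fintype ι
  have hround : ∀ S : Finset ι, ∃ c', c ≤ c' ∧ RoundInvariant d w H Lv A M M' k S c' := by
    intro S
    induction S using Finset.induction_on with
    | empty =>
      exact ⟨c, le_rfl, fun a => ⟨hc.admissible a, hc.blocked a, fun i _ h => hc.level a i h⟩,
        by simp, fun a h => hL.mono hM hMM (hc.level a k (.inl h))⟩
    | insert a S _ ih =>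
      obtain ⟨c₁, hc₁, h₁⟩ := ih
      obtain ⟨c₂, hc₂, h₂⟩ := h₁.exists_insert hw hH hbdd hL hA hk hM hMM hM' a
      exact ⟨c₂, hc₁.trans hc₂, h₂⟩
  obtain ⟨c', hcc', h⟩ := hround Finset.univ
  have hper : ∀ a, Function.Periodic (c' a) (2 * (d : ℤ)) := fun a =>
    (h.push a).admissible.tight.periodic
  refine ⟨c', hcc', fun a => (h.push a).admissible, ?_, fun a i hi => ?_⟩
  · rintro a i (hi | hik) hn
    · exact (h.push a).blocked i hi hn
    · rw [hw.nondeg_congr (hper a) hik] at hn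
      exact (h.blocked a (Finset.mem_univ a) hn).congr hw (hper a) hik.symm
  · by_cases hik : i ≡ k [ZMOD 2 * d]
    · have hn : Nondeg w (c' a) k := (hw.nondeg_congr (hper a) hik).1 (by tauto)
      rw [eq_of_modEq (hper a) hik]
      exact hL.congr hik.symm (h.level a hn)
    · exact hL.mono hM hMM ((h.push a).good i hik (by tauto))

end

-- `L_M` is first left when an edge is pushed whose opposite edge has been treated before, that is,
-- after `d` stages; hence the level after `n` stages.
theorem StageInvariant.exists_of_le {ι : Type*} [Finite ι] {d : ℕ} {w : ℤ → Pt}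
    (hw : CcwDirections d w) {H : Set (ℤ × ℝ)} (hH : H.Finite)
    (hbdd : BddAbove {p | TightPolygon d w p ∧ ∀ h ∈ H, p h.1 ≤ h.2}) {Lv : ℕ → ℤ → ℝ → Prop}
    (hL : LevelSystem d w H Lv) {c : ι → ℤ → ℝ}
    (hc : ∀ a, Admissible d w (others c a) H (c a)) (hlev : ∀ a i, Lv 1 i (c a i)) {n : ℕ}
    (hn : n ≤ 2 * d) :
    ∃ c', c ≤ c' ∧ StageInvariant d w H Lv (fun i => i % (2 * d) < n) (n - d + 1) c' := by
  have hd := hw.two_le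
  induction n with
  | zero =>
    have hneg : ∀ i : ℤ, ¬ i % (2 * d) < (0 : ℕ) := fun i =>
      not_lt.2 (by simpa using Int.emod_nonneg i (by omega))
    exact ⟨c, le_rfl, hc, fun a i hi => absurd hi (hneg i), fun a i _ => by simpa using hlev a i⟩
  | succ n ih =>
    obtain ⟨c₁, hc₁, h₁⟩ := ih (by omega)
    have hmod : (n : ℤ) % (2 * d) = n := Int.emod_eq_of_lt (by omega) (by omega)
    have hA : Function.Periodic (fun i : ℤ => i % (2 * d) < n) (2 * (d : ℤ)) := fun i => by
      simp only [Int.add_emod_right]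
    obtain ⟨c₂, hc₂, h₂⟩ := h₁.exists_next hw hH hbdd hL (M' := n + 1 - d + 1) (k := n) hA
      (by rw [hmod]; exact lt_irrefl _) (by omega) (by omega) fun h => by
        by_contra hlt
        rw [Int.emod_eq_of_lt (by omega) (by omega)] at h
        omega
    refine ⟨c₂, hc₁.trans hc₂, ?_⟩
    convert h₂ using 2 with i
    rw [Int.ModEq, hmod, ← le_iff_lt_or_eq, Nat.cast_succ, Int.lt_add_one_iff]

theorem exists_blocked_extension {ι : Type*} [Finite ι] {d : ℕ} {w : ℤ → Pt}
    (hw : CcwDirections d w) {H : Set (ℤ × ℝ)} (hH : H.Finite)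
    (hbdd : BddAbove {p | TightPolygon d w p ∧ ∀ h ∈ H, p h.1 ≤ h.2}) {Lv : ℕ → ℤ → ℝ → Prop}
    (hL : LevelSystem d w H Lv) {c : ι → ℤ → ℝ}
    (hc : ∀ a, Admissible d w (others c a) H (c a)) (hlev : ∀ a i, Lv 1 i (c a i)) :
    ∃ c', c ≤ c' ∧ (∀ a, Admissible d w (others c' a) H (c' a)) ∧
      (∀ a i, Nondeg w (c' a) i → Blocked d w (others c' a) H (c' a) i) ∧
      ∀ a i, Lv (2 * d) i (c' a i) := by
  have hd := hw.two_le
  obtain ⟨c', hcc', h⟩ := StageInvariant.exists_of_le hw hH hbdd hL hc hlev le_rfl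
  have hall : ∀ i : ℤ, i % (2 * d) < (2 * d : ℕ) := fun i => by
    push_cast
    exact Int.emod_lt_of_pos i (by omega)
  have hnondeg : ∀ a i, Nondeg w (c' a) i → Lv (d + 1) i (c' a i) := fun a i hi => by
    have := h.level a i (.inl hi)
    rwa [two_mul, Nat.add_sub_cancel] at this
  refine ⟨c', hcc', h.admissible, fun a i => h.blocked a i (hall i), fun a i => ?_⟩
  by_cases hi : Nondeg w (c' a) i
  · exact hL.mono (by omega) (by omega) (hnondeg a i hi)
  · have hcorner := hL.corner_of_not_nondeg hw (h.admissible a).tight (k := i - d) (by omega)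
      (by rw [sub_add_cancel]) hi (fun j hj _ => hnondeg a j hj) i
    rw [hw.offset_corner] at hcorner
    exact hL.mono (by omega) (by omega) hcorner

/-! ### Separation of disjoint polygons -/

theorem closure_openPoly {w : ℤ → Pt} {p : ℤ → ℝ} (h : (openPoly w p).Nonempty) :
    closure (openPoly w p) = closedPoly w p := by
  refine (closure_minimal (openPoly_subset_closedPoly w p) (isClosed_closedPoly w p)).antisymm ?_
  obtain ⟨o, ho⟩ := h
  intro x hx
  have hseg : openSegment ℝ x o ⊆ openPoly w p := by
    rintro _ ⟨s, t, hs, ht, hst, rfl⟩ i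
    rw [map_add, map_smul, map_smul, smul_eq_mul, smul_eq_mul]
    calc s * offset w i x + t * offset w i o
        < s * p i + t * p i :=
          add_lt_add_of_le_of_lt (mul_le_mul_of_nonneg_left (hx i) hs.le)
            (mul_lt_mul_of_pos_left (ho i) ht)
      _ = p i := by rw [← add_mul, hst, one_mul]
  exact closure_mono hseg (segment_subset_closure_openSegment (left_mem_segment ℝ x o))

theorem convex_openPoly (w : ℤ → Pt) (p : ℤ → ℝ) : Convex ℝ (openPoly w p) := by
  rw [show openPoly w p = ⋂ i, {x | offset w i x < p i} from Set.ofPred_forall _]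
  exact convex_iInter fun i => convex_halfSpace_lt (offset w i).isLinear _

theorem exists_nonneg_and_succ_nonpos {g : ℤ → ℝ} {n : ℕ} (hn : n ≠ 0)
    (hg : Function.Antiperiodic g (n : ℤ)) : ∃ i, 0 ≤ g i ∧ g (i + 1) ≤ 0 := by
  by_contra! h
  obtain ⟨a, ha⟩ : ∃ a, 0 ≤ g a := by
    rcases le_total 0 (g 0) with h0 | h0
    · exact ⟨0, h0⟩
    · exact ⟨0 + n, by rw [hg]; exact neg_nonneg.2 h0⟩
  have hpos : ∀ k : ℕ, 0 < g (a + k + 1) := by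
    intro k
    induction k with
    | zero => simpa using h a ha
    | succ k ih => simpa [add_assoc] using h _ ih.le
  have hlast := hpos (n - 1)
  rw [add_assoc, ← Nat.cast_succ, Nat.succ_eq_add_one, Nat.sub_add_cancel (by omega), hg] at hlast
  linarith

namespace CcwDirections
variable {d : ℕ} {w : ℤ → Pt} (hw : CcwDirections d w)
include hw

-- The functional `f` lies in the cone between the two directions where its sign changes.
theorem exists_nonneg_combination (f : Pt →L[ℝ] ℝ) :
    ∃ (i : ℤ) (s t : ℝ), 0 ≤ s ∧ 0 ≤ t ∧ ∀ x, f x = s * offset w i x + t * offset w (i + 1) x := by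
  have hd := hw.two_le
  obtain ⟨i, hi, hi'⟩ := exists_nonneg_and_succ_nonpos (g := f ∘ w) (n := d) (by omega)
    fun i => (congrArg f (hw.antiperiodic i)).trans (map_neg f _)
  have hc := hw.cross_pos i (i + 1) (by omega) (by omega)
  refine ⟨i, -f (w (i + 1)) / cross2 (w i) (w (i + 1)), f (w i) / cross2 (w i) (w (i + 1)),
    div_nonneg (neg_nonneg.2 hi') hc.le, div_nonneg hi hc.le, fun x => ?_⟩
  conv_lhs => rw [← hw.corner_offset x i, corner]
  simp only [map_smul, map_sub, smul_eq_mul]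
  field_simp
  ring

theorem separated_of_disjoint {p q : ℤ → ℝ} (hp : TightPolygon d w p) (hq : TightPolygon d w q)
    (h : Disjoint (openPoly w p) (openPoly w q)) : Separated d p q := by
  obtain ⟨f, u, hfp, hfq⟩ := geometric_hahn_banach_open_open (convex_openPoly w p)
    (hw.isOpen_openPoly hp.periodic) (convex_openPoly w q) (hw.isOpen_openPoly hq.periodic) h
  obtain ⟨i, s, t, hs, ht, hf⟩ := hw.exists_nonneg_combination f
  have hle : f (corner w p i) ≤ u := by
    refine closure_minimal (fun x hx => (hfp x hx).le)
      (isClosed_le f.continuous continuous_const) ?_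
    rw [closure_openPoly hp.nonempty]
    exact hp.corner_mem i
  have hge : u ≤ f (corner w q (i + d)) := by
    refine closure_minimal (fun x hx => (hfq x hx).le)
      (isClosed_le continuous_const f.continuous) ?_
    rw [closure_openPoly hq.nonempty]
    exact hq.corner_mem (i + d)
  have hi := hw.offset_corner q (i + d)
  have hi' := hw.offset_succ_corner q (i + d)
  rw [add_right_comm, hw.offset_add_d] at hi'
  rw [hw.offset_add_d] at hi
  rw [hf, hw.offset_corner, hw.offset_succ_corner] at hle
  rw [hf, neg_eq_iff_eq_neg.1 hi, neg_eq_iff_eq_neg.1 hi'] at hge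
  by_contra hsep
  simp only [Separated, not_exists, not_le] at hsep
  have hst : s = 0 ∧ t = 0 := by
    constructor <;> nlinarith [hsep i, hsep (i + 1), mul_nonneg hs (hsep i).le,
      mul_nonneg ht (hsep (i + 1)).le]
  obtain ⟨x, hx⟩ := hp.nonempty
  obtain ⟨y, hy⟩ := hq.nonempty
  have hlt := (hfp x hx).trans (hfq y hy)
  rw [hf, hf, hst.1, hst.2] at hlt
  linarith

end CcwDirections

/-! ### Counterclockwise reindexing -/

/-- The position of the direction `i` in the counterclockwise enumeration, which reads the list
`v₁, v₂, …, v_d` of directions as `v₁, v_d, …, v₂`, and likewise for each later block of length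
`d`. -/
def ccwIndex (d : ℕ) (i : ℤ) : ℤ :=
  if (i - 1) % d = 0 then i else i + d - 2 * ((i - 1) % d)

theorem ccwIndex_one (d : ℕ) : ccwIndex d 1 = 1 := if_pos (by simp)

theorem ccwIndex_of_mem {d : ℕ} {i : ℤ} (hi : i ∈ Set.Icc 2 (d : ℤ)) :
    ccwIndex d i = d + 2 - i := by
  obtain ⟨h2, hd⟩ := hi
  rw [ccwIndex, Int.emod_eq_of_lt (by omega) (by omega), if_neg (by omega)]
  ring

theorem ccwIndex_add (d : ℕ) (i : ℤ) : ccwIndex d (i + d) = ccwIndex d i + d := by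
  rw [ccwIndex, ccwIndex, add_sub_right_comm, Int.add_emod_right]
  split_ifs <;> ring

theorem ccwIndex_involutive {d : ℕ} (hd : 0 < d) : Function.Involutive (ccwIndex d) := by
  have hper : Function.Periodic (fun i => ccwIndex d (ccwIndex d i) - i) (d : ℤ) := by
    intro i
    simp only [ccwIndex_add, add_sub_add_right_eq_sub]
  intro i
  obtain ⟨j, ⟨hj1, hjd⟩, hj⟩ := exists_modEq_mem_Ico (Int.natCast_pos.2 hd) 1 i
  rw [← sub_eq_zero, ← eq_of_modEq hper hj, sub_eq_zero]
  rcases hj1.eq_or_lt with rfl | hj1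
  · rw [ccwIndex_one, ccwIndex_one]
  · rw [ccwIndex_of_mem ⟨hj1, by omega⟩, ccwIndex_of_mem ⟨by omega, by omega⟩]
    ring

/-- The family `f`, indexed by the directions, enumerated in counterclockwise order. -/
def reindex {α : Type*} (d : ℕ) (f : ℤ → α) : ℤ → α := fun i => f (ccwIndex d i)

theorem reindex_reindex {α : Type*} {d : ℕ} (hd : 0 < d) (f : ℤ → α) :
    reindex d (reindex d f) = f :=
  funext fun i => congrArg f (ccwIndex_involutive hd i)

theorem periodic_reindex {α : Type*} {d : ℕ} {f : ℤ → α} (hf : Function.Periodic f (2 * (d : ℤ))) :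
    Function.Periodic (reindex d f) (2 * (d : ℤ)) := by
  intro i
  rw [reindex, reindex, two_mul, ← add_assoc, ccwIndex_add, ccwIndex_add, add_assoc, ← two_mul,
    hf]

theorem CcwDirections.of_cross_pos {d : ℕ} {w : ℤ → Pt} (hd : 2 ≤ d)
    (hw : Function.Antiperiodic w (d : ℤ))
    (hpos : ∀ i j : ℤ, 1 ≤ i → i < j → j ≤ d → 0 < cross2 (w i) (w j)) : CcwDirections d w := by
  refine ⟨hd, hw, fun i j hij hji => ?_⟩
  have hper : Function.Periodic (fun k => cross2 (w k) (w (k + (j - i)))) (d : ℤ) := by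
    intro k
    simp only [add_right_comm k (d : ℤ), hw _, cross2, Prod.fst_neg, Prod.snd_neg, neg_mul_neg]
  obtain ⟨k, ⟨hk1, hkd⟩, hk⟩ := exists_modEq_mem_Ico (show 0 < (d : ℤ) by omega) 1 i
  have e := eq_of_modEq hper hk
  simp only [add_sub_cancel] at e
  rw [← e]
  rcases le_or_gt (k + (j - i)) d with h | h
  · exact hpos _ _ hk1 (by omega) h
  · have hlt := hpos (k + (j - i) - d) k (by omega) (by omega) (by omega)
    have en := hw (k + (j - i) - d)
    rw [sub_add_cancel] at en
    rw [en]
    simp only [cross2, Prod.fst_neg, Prod.snd_neg] at hlt ⊢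
    linarith

theorem cross2_pos_of_slope_lt {a b : Pt} (ha : a.1 < 0) (hb : b.1 < 0)
    (h : a.2 / a.1 < b.2 / b.1) : 0 < cross2 a b := by
  have e : cross2 a b = (b.2 / b.1 - a.2 / a.1) * (a.1 * b.1) := by
    rw [cross2]
    field_simp [ha.ne, hb.ne]
  rw [e]
  exact mul_pos (sub_pos.2 h) (mul_pos_of_neg_of_neg ha hb)

theorem DirOK.ccwDirections {d : ℕ} {v : ℤ → Pt} (hv : DirOK d v) :
    CcwDirections d (reindex d v) := by
  obtain ⟨hd, hv1, hanti, -, hneg, hslope⟩ := hv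
  refine .of_cross_pos hd (fun i => ?_) fun i j hi hij hj => ?_
  · rw [reindex, reindex, ccwIndex_add, hanti]
  · rw [reindex, reindex, ccwIndex_of_mem ⟨by omega, hj⟩]
    have hj' := hneg (d + 2 - j) (by omega) (by omega)
    rcases hi.eq_or_lt with rfl | hi
    · rw [ccwIndex_one, hv1]
      simpa [cross2] using hj'
    · rw [ccwIndex_of_mem ⟨hi, by omega⟩]
      exact cross2_pos_of_slope_lt (hneg _ (by omega) (by omega)) hj'
        (hslope _ _ (by omega) (by omega) (by omega))

theorem exists_mem_Icc_iff_of_periodic {n : ℤ} (hn : 0 < n) {P : ℤ → Prop}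
    (hP : Function.Periodic P n) : (∃ i ∈ Finset.Icc 1 n, P i) ↔ ∃ i, P i := by
  refine ⟨fun ⟨i, _, hi⟩ => ⟨i, hi⟩, fun ⟨i, hi⟩ => ?_⟩
  obtain ⟨j, ⟨hj1, hj⟩, hji⟩ := exists_modEq_mem_Ico hn 1 i
  exact ⟨j, Finset.mem_Icc.2 ⟨hj1, by omega⟩, (eq_of_modEq hP hji).symm ▸ hi⟩

theorem forall_mem_Icc_iff_of_periodic {n : ℤ} (hn : 0 < n) {P : ℤ → Prop}
    (hP : Function.Periodic P n) : (∀ i ∈ Finset.Icc 1 n, P i) ↔ ∀ i, P i := by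
  have h := exists_mem_Icc_iff_of_periodic hn (P := fun i => ¬ P i) fun i => congrArg Not (hP i)
  simpa using not_congr h

/-! ### Discrete-orientation polygons as tight polygons -/

theorem dot2_perp2_eq_offset (v : ℤ → Pt) (i : ℤ) (x : Pt) :
    dot2 x (perp2 (v i)) = offset v i x := by
  rw [offset_apply, dot2, perp2, cross2]
  ring

theorem IsTH.tail_eq {v : ℤ → Pt} {i : ℤ} {e : Set Pt} {a b a' b' : Pt} (hi : v i ≠ 0)
    (h : IsTH v i e a b) (h' : IsTH v i e a' b') : a = a' := by
  obtain ⟨rfl, c, hc, hcb⟩ := h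
  obtain ⟨hseg, c', hc', hcb'⟩ := h'
  have hb := sub_eq_iff_eq_add'.1 hcb
  have hb' := sub_eq_iff_eq_add'.1 hcb'
  have ha := left_mem_segment ℝ a b
  have ha' := left_mem_segment ℝ a' b'
  rw [hseg, hb', segment_add_smul _ _ hc'] at ha
  rw [← hseg, hb, segment_add_smul _ _ hc] at ha'
  obtain ⟨s, hs, hsa⟩ := ha
  obtain ⟨s', hs', hsa'⟩ := ha'
  have h0 : (s + s') • v i = 0 := by
    rw [← hsa'] at hsa
    rw [add_comm, add_smul]
    exact add_eq_left.1 ((add_assoc a _ _).symm.trans hsa)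
  rcases smul_eq_zero.1 h0 with h0 | h0
  · have hs0 : s = 0 := by linarith [hs.1, hs'.1]
    simpa [hs0] using hsa.symm
  · exact absurd h0 hi

theorem IsTH.neg {v : ℤ → Pt} {i : ℤ} {e : Set Pt} {a b : Pt} (h : IsTH v i e a b) :
    IsTH (-v) i e b a := by
  obtain ⟨he, c, hc, hcb⟩ := h
  refine ⟨by rw [he, segment_symm], c, hc, ?_⟩
  rw [Pi.neg_apply, smul_neg, ← hcb, neg_sub]

theorem IsTH.head_eq {v : ℤ → Pt} {i : ℤ} {e : Set Pt} {a b a' b' : Pt} (hi : v i ≠ 0)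
    (h : IsTH v i e a b) (h' : IsTH v i e a' b') : b = b' :=
  h.neg.tail_eq (neg_ne_zero.2 hi) h'.neg

theorem IsTH.tHpair_eq {d : ℕ} {v : ℤ → Pt} {p : ℤ → ℝ} {i : ℤ} {a b : Pt} (hi : v i ≠ 0)
    (h : IsTH v i (edgeOf d v p i) a b) : THpair d v p i = (a, b) := by
  have hex : ∃ th : Pt × Pt, IsTH v i (edgeOf d v p i) th.1 th.2 := ⟨(a, b), h⟩
  rw [THpair, dif_pos hex]
  exact Prod.ext (hex.choose_spec.tail_eq hi h) (hex.choose_spec.head_eq hi h)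

namespace DirOK
variable {d : ℕ} {v : ℤ → Pt} (hv : DirOK d v) {p : ℤ → ℝ}
include hv

theorem pos : 0 < d := by have := hv.1; omega

theorem reindex_ccwIndex {α : Type*} (f : ℤ → α) (i : ℤ) : reindex d f (ccwIndex d i) = f i :=
  congrFun (reindex_reindex hv.pos f) i

theorem offset_ccwIndex (i : ℤ) : offset (reindex d v) (ccwIndex d i) = offset v i :=
  hv.reindex_ccwIndex (offset v) i

theorem periodic : Function.Periodic v (2 * (d : ℤ)) :=
  Function.Antiperiodic.periodic_two_mul hv.2.2.1

theorem DOPset_eq (hp : Function.Periodic p (2 * (d : ℤ))) :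
    DOPset d v p = openPoly (reindex d v) (reindex d p) := by
  ext x
  have hper : Function.Periodic (fun i => offset v i x < p i) (2 * (d : ℤ)) := fun i => by
    simp only [offset, hv.periodic i, hp i]
  have h2 : 0 < 2 * (d : ℤ) := by have := hv.pos; omega
  simp only [DOPset, openPoly, Set.mem_ofPred_eq, dot2_perp2_eq_offset,
    forall_mem_Icc_iff_of_periodic h2 hper]
  exact (ccwIndex_involutive hv.pos).surjective.forall

theorem closure_DOPset (hp : Function.Periodic p (2 * (d : ℤ))) (hne : (DOPset d v p).Nonempty) :
    closure (DOPset d v p) = closedPoly (reindex d v) (reindex d p) := by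
  rw [hv.DOPset_eq hp] at hne ⊢
  exact closure_openPoly hne

theorem edgeOf_periodic (hp : Function.Periodic p (2 * (d : ℤ))) :
    Function.Periodic (edgeOf d v p) (2 * (d : ℤ)) := fun i => by
  simp only [edgeOf, hv.periodic i, hp i]

theorem mem_edgeOf_iff (hp : Function.Periodic p (2 * (d : ℤ))) (hne : (DOPset d v p).Nonempty)
    {i : ℤ} {x : Pt} :
    x ∈ edgeOf d v p i ↔ x ∈ closedPoly (reindex d v) (reindex d p) ∧
      offset (reindex d v) (ccwIndex d i) x = reindex d p (ccwIndex d i) := by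
  rw [edgeOf, hv.closure_DOPset hp hne, hv.offset_ccwIndex, hv.reindex_ccwIndex,
    ← dot2_perp2_eq_offset]
  rfl

theorem isDOP_iff : IsDOP d v p ↔ TightPolygon d (reindex d v) (reindex d p) := by
  have hw := hv.ccwDirections
  have h2 : 0 < 2 * (d : ℤ) := by have := hv.pos; omega
  constructor
  · rintro ⟨hne, -, hp, hedge⟩
    have hper : Function.Periodic (fun i => (edgeOf d v p i).Nonempty) (2 * (d : ℤ)) := fun i => by
      simp only [hv.edgeOf_periodic hp i]
    rw [forall_mem_Icc_iff_of_periodic h2 hper] at hedge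
    refine .of_forall_exists_mem hw (periodic_reindex hp) (hv.DOPset_eq hp ▸ hne) ?_
    refine (ccwIndex_involutive hv.pos).surjective.forall.2 fun i => ?_
    exact (hedge i).imp fun x hx => (hv.mem_edgeOf_iff hp hne).1 hx
  · intro h
    have hp : Function.Periodic p (2 * (d : ℤ)) :=
      reindex_reindex hv.pos p ▸ periodic_reindex h.periodic
    have hne : (DOPset d v p).Nonempty := hv.DOPset_eq hp ▸ h.nonempty
    refine ⟨hne, ?_, hp, fun i _ =>
      ⟨_, (hv.mem_edgeOf_iff hp hne).2 ⟨h.corner_mem _, hw.offset_corner _ _⟩⟩⟩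
    rw [hv.DOPset_eq hp]
    exact (hw.isCompact_closedPoly _).isBounded.subset (openPoly_subset_closedPoly _ _)

end DirOK

namespace IsDOP
variable {d : ℕ} {v : ℤ → Pt} (hv : DirOK d v) {p : ℤ → ℝ} (hp : IsDOP d v p)
include hv hp

theorem edgeOf_eq_segment (i : ℤ) : edgeOf d v p i =
    segment ℝ (corner (reindex d v) (reindex d p) (ccwIndex d i - 1))
      (corner (reindex d v) (reindex d p) (ccwIndex d i)) := by
  have hw := hv.ccwDirections
  have ht := hv.isDOP_iff.1 hp
  have hmem {x : Pt} := hv.mem_edgeOf_iff (x := x) (i := i) hp.2.2.1 hp.1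
  have hconv : Convex ℝ (edgeOf d v p i) := by
    have e : edgeOf d v p i = closedPoly (reindex d v) (reindex d p) ∩
        {x | offset (reindex d v) (ccwIndex d i) x = reindex d p (ccwIndex d i)} :=
      Set.ext fun _ => hmem
    rw [e]
    exact (convex_closedPoly _ _).inter (convex_hyperplane (offset _ _).isLinear _)
  refine Set.Subset.antisymm (fun x hx => ?_) (hconv.segment_subset ?_ ?_)
  · exact ht.mem_segment_corner hw (hmem.1 hx).1 (hmem.1 hx).2
  · exact hmem.2 ⟨ht.corner_mem _, hw.offset_corner_pred _ _⟩
  · exact hmem.2 ⟨ht.corner_mem _, hw.offset_corner _ _⟩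

theorem tHpair_eq (i : ℤ) : THpair d v p i =
    (corner (reindex d v) (reindex d p) (ccwIndex d i - 1),
      corner (reindex d v) (reindex d p) (ccwIndex d i)) := by
  have hw := hv.ccwDirections
  obtain ⟨t, ht0, ht⟩ := (hv.isDOP_iff.1 hp).exists_corner_eq hw (ccwIndex d i)
  rw [hv.reindex_ccwIndex] at ht
  refine IsTH.tHpair_eq (fun h0 => ?_) ⟨edgeOf_eq_segment hv hp i, t, ht0, sub_eq_iff_eq_add'.2 ht⟩
  have hpos := hw.offset_succ_pos (ccwIndex d i)
  rw [hv.reindex_ccwIndex, h0, map_zero] at hpos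
  exact hpos.false

theorem tlPt_eq (i : ℤ) :
    tlPt d v p i = corner (reindex d v) (reindex d p) (ccwIndex d i - 1) := by
  rw [tlPt, tHpair_eq hv hp]

theorem hdPt_eq (i : ℤ) : hdPt d v p i = corner (reindex d v) (reindex d p) (ccwIndex d i) := by
  rw [hdPt, tHpair_eq hv hp]

theorem edgeInterior_subset_relintE (i : ℤ) :
    edgeInterior d (reindex d v) (reindex d p) (ccwIndex d i) ⊆ relintE d v p i := by
  have hw := hv.ccwDirections
  have ht := hv.isDOP_iff.1 hp
  intro x hx
  rw [relintE, tlPt_eq hv hp, hdPt_eq hv hp]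
  refine ⟨ht.mem_segment_corner hw (ht.edgeInterior_subset_closedPoly hw _ hx) hx.1, ?_⟩
  simpa only [Set.mem_insert_iff, Set.mem_singleton_iff, not_or] using
    TightPolygon.ne_corner_of_mem_edgeInterior hw hx

theorem vertexOf_iff {x : Pt} :
    VertexOf d v p x ↔ ∃ i, x = corner (reindex d v) (reindex d p) i := by
  have hhd : hdPt d v p = reindex d (corner (reindex d v) (reindex d p)) :=
    funext (hdPt_eq hv hp)
  constructor
  · rintro ⟨i, -, rfl | rfl⟩
    · exact ⟨_, tlPt_eq hv hp i⟩
    · exact ⟨_, hdPt_eq hv hp i⟩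
  · intro hx
    have hper : Function.Periodic (fun i => x = hdPt d v p i) (2 * (d : ℤ)) := fun i => by
      simp only [hhd, periodic_reindex
        (hv.ccwDirections.corner_periodic (hv.isDOP_iff.1 hp).periodic) i]
    obtain ⟨i, hi, e⟩ := (exists_mem_Icc_iff_of_periodic (by have := hv.pos; omega) hper).2
      (by simpa only [hhd] using! (ccwIndex_involutive hv.pos).surjective.exists.1 hx)
    exact ⟨i, hi, Or.inr e⟩

end IsDOP

/-! ### The grid -/

/-- The line of offset `c` in the direction `i`, in the counterclockwise enumeration of the
directions, belongs to the family `L_M`. -/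
def IsGridLine (d : ℕ) (v : ℤ → Pt) (I : Set (ℤ → ℝ)) (M : ℕ) (i : ℤ) (c : ℝ) : Prop :=
  {x | offset (reindex d v) i x = c} ∈ Lgrid d v I M

section Grid
variable {d : ℕ} {v : ℤ → Pt} (hv : DirOK d v) {I : Set (ℤ → ℝ)}
include hv

theorem DirOK.offset_add_d (i : ℤ) (x : Pt) : offset v (i + d) x = -offset v i x := by
  rw [← hv.offset_ccwIndex, ← hv.offset_ccwIndex, ccwIndex_add, hv.ccwDirections.offset_add_d]

theorem DirOK.lineThr_eq (a : Pt) (i : ℤ) :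
    lineThr a (v i) = {x | offset v i x = offset v i a} := by
  ext x
  constructor
  · rintro ⟨t, rfl⟩
    rw [Set.mem_ofPred_eq, offset_add_smul, offset_self, mul_zero, add_zero]
  · intro hx
    rw [Set.mem_ofPred_eq, ← hv.offset_ccwIndex] at hx
    obtain ⟨t, ht⟩ := hv.ccwDirections.exists_eq_add_smul hx
    exact ⟨t, by rw [ht, hv.reindex_ccwIndex]⟩

theorem isGridLine_of_forall_lineThr_mem {M : ℕ} {a : Pt}
    (h : ∀ i : ℤ, 1 ≤ i → i ≤ d → lineThr a (v i) ∈ Lgrid d v I M) (j : ℤ) :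
    IsGridLine d v I M j (offset (reindex d v) j a) := by
  have hper : Function.Periodic (fun i => {x | offset v i x = offset v i a}) (d : ℤ) := fun i => by
    simp only [hv.offset_add_d, neg_inj]
  obtain ⟨i, ⟨hi1, hid⟩, hij⟩ :=
    exists_modEq_mem_Ico (Int.natCast_pos.2 hv.pos) 1 (ccwIndex d j)
  have e := (hv.lineThr_eq a i).trans (eq_of_modEq hper hij)
  exact Set.mem_of_eq_of_mem e.symm (h i hi1 (by omega))

theorem exists_mem_forall_isGridLine {M : ℕ} {l : Set Pt} (hl : l ∈ Lgrid d v I M) :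
    ∃ a ∈ l, ∀ j, IsGridLine d v I M j (offset (reindex d v) j a) := by
  obtain ⟨i, a, rfl, ha⟩ : ∃ i a, l = lineThr a (v i) ∧
      ∀ j : ℤ, 1 ≤ j → j ≤ d → lineThr a (v j) ∈ Lgrid d v I M := by
    match M, hl with
    | 1, ⟨i, _, _, a, ha, e⟩ => exact ⟨i, a, e, fun j h1 hd => ⟨j, h1, hd, a, ha, rfl⟩⟩
    | _ + 2, ⟨i, _, _, a, ha, e⟩ => exact ⟨i, a, e, fun j h1 hd => ⟨j, h1, hd, a, ha, rfl⟩⟩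
  exact ⟨a, ⟨0, by rw [zero_smul, add_zero]⟩, isGridLine_of_forall_lineThr_mem hv ha⟩

theorem mem_Vgrid_of_isGridLine {M : ℕ} {a b : ℤ} {x : Pt} (hab : ¬ a ≡ b [ZMOD d])
    (ha : IsGridLine d v I M a (offset (reindex d v) a x))
    (hb : IsGridLine d v I M b (offset (reindex d v) b x)) : x ∈ Vgrid d v I M := by
  refine ⟨_, ha, _, hb, fun e => hab ?_, rfl, rfl⟩
  have h : x + reindex d v b ∈
      {y | offset (reindex d v) b y = offset (reindex d v) b x} := by
    rw [Set.mem_ofPred_eq, map_add, offset_self, add_zero]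
  rw [← e, Set.mem_ofPred_eq, map_add] at h
  exact hv.ccwDirections.modEq_of_offset_eq_zero (add_eq_left.1 h)

theorem isGridLine_of_mem_Vgrid {M : ℕ} (hM : 1 ≤ M) {x : Pt} (hx : x ∈ Vgrid d v I M) (i : ℤ) :
    IsGridLine d v I (M + 1) i (offset (reindex d v) i x) := by
  obtain ⟨k, rfl⟩ := Nat.exists_eq_add_of_le' hM
  refine isGridLine_of_forall_lineThr_mem hv (fun j h1 hd => ?_) i
  exact ⟨j, h1, hd, x, hx, rfl⟩

theorem isGridLine_succ {M : ℕ} (hM : 1 ≤ M) {i : ℤ} {c : ℝ} (h : IsGridLine d v I M i c) :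
    IsGridLine d v I (M + 1) i c := by
  obtain ⟨a, rfl, ha⟩ := exists_mem_forall_isGridLine hv h
  have hd := hv.1
  exact isGridLine_of_mem_Vgrid hv hM (mem_Vgrid_of_isGridLine hv
    (not_modEq_of_lt (show (0 : ℤ) < 1 by norm_num) (by omega)) (ha 0) (ha 1)) i

theorem levelSystem_isGridLine {H : Set (ℤ × ℝ)} (hH : ∀ h ∈ H, IsGridLine d v I 1 h.1 h.2) :
    LevelSystem d (reindex d v) H (IsGridLine d v I) where
  congr h := by simp only [IsGridLine, hv.ccwDirections.offset_congr h, imp_self]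
  neg h := by
    simpa only [IsGridLine, hv.ccwDirections.offset_add_d, neg_inj] using h
  succ hM h := isGridLine_succ hv hM h
  meet hM hab ha hb i := isGridLine_of_mem_Vgrid hv hM (mem_Vgrid_of_isGridLine hv hab ha hb) i
  wall := hH

theorem isGridLine_one_of_mem {p : ℤ → ℝ} (hp : IsDOP d v p) (hpI : p ∈ I) (i : ℤ) :
    IsGridLine d v I 1 i (reindex d p i) := by
  rw [← hv.ccwDirections.offset_corner (reindex d p) i]
  refine isGridLine_of_forall_lineThr_mem hv (fun j h1 hd => ?_) i
  exact ⟨j, h1, hd, _, ⟨p, hpI, (IsDOP.vertexOf_iff hv hp).2 ⟨i, rfl⟩⟩, rfl⟩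

end Grid

/-! ### Bounding regions -/

/-- A bounded region cut out by finitely many closed half-planes whose boundary lines belong to
`L₁`; the half-plane `⟨x, v_i^⊥⟩ ≤ c` is encoded as the pair `(i, c)`. -/
def IsGridRegion (d : ℕ) (v : ℤ → Pt) (I : Set (ℤ → ℝ)) (K : Set Pt) : Prop :=
  Bornology.IsBounded K ∧ ∃ H : Set (ℤ × ℝ), H.Finite ∧
    (∀ h ∈ H, {x | offset v h.1 x = h.2} ∈ LOne d v I) ∧ K = {x | ∀ h ∈ H, offset v h.1 x ≤ h.2}

theorem IsGridRegion.exists_walls {d : ℕ} {v : ℤ → Pt} (hv : DirOK d v) {I : Set (ℤ → ℝ)}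
    {K : Set Pt} (hK : IsGridRegion d v I K) : ∃ H : Set (ℤ × ℝ), H.Finite ∧
      (∀ h ∈ H, IsGridLine d v I 1 h.1 h.2) ∧
      K = {x | ∀ h ∈ H, offset (reindex d v) h.1 x ≤ h.2} := by
  obtain ⟨-, H, hfin, hline, rfl⟩ := hK
  refine ⟨Prod.map (ccwIndex d) id '' H, hfin.image _, ?_, ?_⟩
  · rintro _ ⟨h, hh, rfl⟩
    rw [IsGridLine, Prod.map_fst, hv.offset_ccwIndex]
    exact hline h hh
  · simp only [Set.forall_mem_image, Prod.map_fst, Prod.map_snd, hv.offset_ccwIndex, id]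

theorem mem_frontier_of_offset_eq {d : ℕ} {w : ℤ → Pt} (hw : CcwDirections d w)
    {H : Set (ℤ × ℝ)} {x : Pt} (hx : ∀ h ∈ H, offset w h.1 x ≤ h.2) {h : ℤ × ℝ} (hh : h ∈ H)
    (he : offset w h.1 x = h.2) : x ∈ frontier {x | ∀ h ∈ H, offset w h.1 x ≤ h.2} := by
  refine ⟨subset_closure hx, fun hint => ?_⟩
  obtain ⟨y, hy, hlt⟩ := hw.exists_mem_offset_lt isOpen_interior hint h.1
  exact (hlt.trans_le ((interior_subset hy : ∀ h ∈ H, _) h hh)).ne he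

theorem exists_halfPlane_of_segment_subset {d : ℕ} {v : ℤ → Pt} (hv : DirOK d v)
    {I : Set (ℤ → ℝ)} {l : Set Pt} (hl : l ∈ LOne d v I) {a u : Pt} (hu : u ≠ 0)
    (hseg : segment ℝ a (a + u) ⊆ l) {s : ℝ} (hs : s ≠ 0) :
    ∃ h : ℤ × ℝ, {x | offset v h.1 x = h.2} ∈ LOne d v I ∧
      ∀ x, offset v h.1 x ≤ h.2 ↔ 0 ≤ s * cross2 u (x - a) := by
  have ha := hseg (left_mem_segment ℝ _ _)
  have hau := hseg (right_mem_segment ℝ _ _)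
  obtain ⟨i, -, -, b, -, rfl⟩ := id hl
  rw [hv.lineThr_eq, Set.mem_ofPred_eq] at ha hau
  rw [hv.lineThr_eq, ← ha] at hl
  rw [map_add, ha, add_eq_left, ← map_zero (offset v i), ← hv.offset_ccwIndex] at hau
  obtain ⟨t, rfl⟩ := hv.ccwDirections.exists_eq_add_smul hau
  rw [zero_add, hv.reindex_ccwIndex] at hu ⊢
  have hcross : ∀ x, s * cross2 (t • v i) (x - a) = s * t * (offset v i a - offset v i x) := by
    intro x
    rw [← map_sub, offset_apply]
    simp only [cross2, Prod.smul_fst, Prod.smul_snd, Prod.fst_sub, Prod.snd_sub, smul_eq_mul]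
    ring
  rcases lt_or_gt_of_ne (mul_ne_zero hs (left_ne_zero_of_smul hu)) with hst | hst
  · refine ⟨(i + d, -offset v i a), by simpa only [hv.offset_add_d, neg_inj], fun x => ?_⟩
    rw [hv.offset_add_d, hcross, neg_le_neg_iff, ← neg_mul_neg,
      mul_nonneg_iff_of_pos_left (neg_pos.2 hst), neg_sub, sub_nonneg]
  · refine ⟨(i, offset v i a), hl, fun x => ?_⟩
    rw [hcross, mul_nonneg_iff_of_pos_left hst, sub_nonneg]

theorem exists_eq_add_smul_add_smul {u w : Pt} (h : cross2 u w ≠ 0) (a x : Pt) :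
    ∃ s t : ℝ, x = a + s • u + t • w := by
  refine ⟨cross2 (x - a) w / cross2 u w, cross2 u (x - a) / cross2 u w, ?_⟩
  ext <;> simp only [Prod.fst_add, Prod.snd_add, Prod.smul_fst, Prod.smul_snd, smul_eq_mul] <;>
    field_simp <;> simp only [cross2, Prod.fst_sub, Prod.snd_sub] <;> ring

theorem add_smul_add_smul_inequalities_iff {u w : Pt} (h : cross2 u w ≠ 0) (a : Pt) (s t : ℝ) :
    0 ≤ cross2 u w * cross2 u (a + s • u + t • w - a) ∧
        0 ≤ -cross2 u w * cross2 u (a + s • u + t • w - (a + w)) ∧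
        0 ≤ -cross2 u w * cross2 w (a + s • u + t • w - a) ∧
        0 ≤ cross2 u w * cross2 w (a + s • u + t • w - (a + u)) ↔
      s ∈ Set.Icc (0 : ℝ) 1 ∧ t ∈ Set.Icc (0 : ℝ) 1 := by
  have hpos : 0 < cross2 u w * cross2 u w := mul_self_pos.2 h
  have h₁ : cross2 u w * cross2 u (a + s • u + t • w - a) = cross2 u w * cross2 u w * t := by
    simp only [cross2, Prod.fst_add, Prod.snd_add, Prod.fst_sub, Prod.snd_sub, Prod.smul_fst,
      Prod.smul_snd, smul_eq_mul]
    ring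
  have h₂ : -cross2 u w * cross2 u (a + s • u + t • w - (a + w)) =
      cross2 u w * cross2 u w * (1 - t) := by
    simp only [cross2, Prod.fst_add, Prod.snd_add, Prod.fst_sub, Prod.snd_sub, Prod.smul_fst,
      Prod.smul_snd, smul_eq_mul]
    ring
  have h₃ : -cross2 u w * cross2 w (a + s • u + t • w - a) = cross2 u w * cross2 u w * s := by
    simp only [cross2, Prod.fst_add, Prod.snd_add, Prod.fst_sub, Prod.snd_sub, Prod.smul_fst,
      Prod.smul_snd, smul_eq_mul]
    ring
  have h₄ : cross2 u w * cross2 w (a + s • u + t • w - (a + u)) =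
      cross2 u w * cross2 u w * (1 - s) := by
    simp only [cross2, Prod.fst_add, Prod.snd_add, Prod.fst_sub, Prod.snd_sub, Prod.smul_fst,
      Prod.smul_snd, smul_eq_mul]
    ring
  rw [h₁, h₂, h₃, h₄]
  simp only [mul_nonneg_iff_of_pos_left hpos, sub_nonneg, Set.mem_Icc]
  tauto

theorem mem_parallelogram_iff {a u w x : Pt} (h : cross2 u w ≠ 0) :
    x ∈ (fun st : ℝ × ℝ => a + st.1 • u + st.2 • w) ''
        {st : ℝ × ℝ | st.1 ∈ Set.Icc (0 : ℝ) 1 ∧ st.2 ∈ Set.Icc (0 : ℝ) 1} ↔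
      0 ≤ cross2 u w * cross2 u (x - a) ∧ 0 ≤ -cross2 u w * cross2 u (x - (a + w)) ∧
        0 ≤ -cross2 u w * cross2 w (x - a) ∧ 0 ≤ cross2 u w * cross2 w (x - (a + u)) := by
  constructor
  · rintro ⟨⟨s, t⟩, hst, rfl⟩
    exact (add_smul_add_smul_inequalities_iff h a s t).2 hst
  · obtain ⟨s, t, rfl⟩ := exists_eq_add_smul_add_smul h a x
    exact fun hx => ⟨(s, t), (add_smul_add_smul_inequalities_iff h a s t).1 hx, rfl⟩

theorem isGridRegion_parallelogram {d : ℕ} {v : ℤ → Pt} (hv : DirOK d v) {I : Set (ℤ → ℝ)}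
    {a u w : Pt} (h : cross2 u w ≠ 0)
    (h₁ : ∃ l ∈ LOne d v I, segment ℝ a (a + u) ⊆ l)
    (h₂ : ∃ l ∈ LOne d v I, segment ℝ (a + w) (a + u + w) ⊆ l)
    (h₃ : ∃ l ∈ LOne d v I, segment ℝ a (a + w) ⊆ l)
    (h₄ : ∃ l ∈ LOne d v I, segment ℝ (a + u) (a + u + w) ⊆ l) :
    IsGridRegion d v I ((fun st : ℝ × ℝ => a + st.1 • u + st.2 • w) ''
      {st : ℝ × ℝ | st.1 ∈ Set.Icc (0 : ℝ) 1 ∧ st.2 ∈ Set.Icc (0 : ℝ) 1}) := by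
  have hu : u ≠ 0 := by rintro rfl; simp [cross2] at h
  have hw : w ≠ 0 := by rintro rfl; simp [cross2] at h
  obtain ⟨l₁, hl₁, hs₁⟩ := h₁
  obtain ⟨l₂, hl₂, hs₂⟩ := h₂
  obtain ⟨l₃, hl₃, hs₃⟩ := h₃
  obtain ⟨l₄, hl₄, hs₄⟩ := h₄
  rw [add_right_comm] at hs₂
  obtain ⟨e₁, he₁, hx₁⟩ := exists_halfPlane_of_segment_subset hv hl₁ hu hs₁ h
  obtain ⟨e₂, he₂, hx₂⟩ := exists_halfPlane_of_segment_subset hv hl₂ hu hs₂ (neg_ne_zero.2 h)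
  obtain ⟨e₃, he₃, hx₃⟩ := exists_halfPlane_of_segment_subset hv hl₃ hw hs₃ (neg_ne_zero.2 h)
  obtain ⟨e₄, he₄, hx₄⟩ := exists_halfPlane_of_segment_subset hv hl₄ hw hs₄ h
  refine ⟨?_, {e₁, e₂, e₃, e₄}, by simp, ?_, ?_⟩
  · exact ((isCompact_Icc.prod isCompact_Icc).image (by fun_prop)).isBounded
  · rintro _ (rfl | rfl | rfl | rfl) <;> assumption
  · ext x
    simp only [mem_parallelogram_iff h, Set.mem_ofPred_eq, Set.mem_insert_iff,
      Set.mem_singleton_iff, forall_eq_or_imp, forall_eq, hx₁, hx₂, hx₃, hx₄]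

/-! ### The extension theorem -/

section Family
variable {d : ℕ} {w : ℤ → Pt} (hw : CcwDirections d w) {H : Set (ℤ × ℝ)}

theorem Admissible.closedPoly_subset {Q : Set (ℤ → ℝ)} {p : ℤ → ℝ} (hp : Admissible d w Q H p) :
    closedPoly w p ⊆ {x | ∀ h ∈ H, offset w h.1 x ≤ h.2} :=
  fun _ hx h hh => (hx h.1).trans (hp.le_wall h hh)

include hw

theorem CcwDirections.bddAbove_tightPolygon
    (hK : Bornology.IsBounded {x | ∀ h ∈ H, offset w h.1 x ≤ h.2}) :
    BddAbove {p | TightPolygon d w p ∧ ∀ h ∈ H, p h.1 ≤ h.2} := by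
  refine ⟨fun i => sSup (offset w i '' {x | ∀ h ∈ H, offset w h.1 x ≤ h.2}), ?_⟩
  rintro p ⟨hp, hle⟩ i
  rw [← hw.offset_corner p i]
  refine le_csSup ((offset w i).lipschitz.isBounded_image hK).bddAbove ⟨_, ?_, rfl⟩
  exact fun h hh => (hp.corner_mem i h.1).trans (hle h hh)

end Family

section Family
variable {d : ℕ} {v : ℤ → Pt} (hv : DirOK d v) {ι : Type*} {p : ι → ℤ → ℝ} {H : Set (ℤ × ℝ)}

theorem injective_of_pairwise_disjoint_DOPset (hne : ∀ a, (DOPset d v (p a)).Nonempty)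
    (hdisj : Pairwise fun a b => Disjoint (DOPset d v (p a)) (DOPset d v (p b))) :
    Function.Injective fun a => DOPset d v (p a) := by
  intro a b (hab : DOPset d v (p a) = DOPset d v (p b))
  by_contra h
  have hself : Disjoint (DOPset d v (p a)) (DOPset d v (p b)) := hdisj h
  rw [hab, disjoint_self] at hself
  exact (hne b).ne_empty hself

theorem indep_range (hne : ∀ a, (DOPset d v (p a)).Nonempty)
    (hdisj : Pairwise fun a b => Disjoint (DOPset d v (p a)) (DOPset d v (p b))) :
    Indep d v (Set.range p) := by
  rintro _ ⟨a, rfl⟩ _ ⟨b, rfl⟩ hab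
  have hab' : a ≠ b := ne_of_apply_ne p hab
  exact ⟨(injective_of_pairwise_disjoint_DOPset hne hdisj).ne hab',
    Set.disjoint_iff_inter_eq_empty.1 (hdisj hab')⟩

include hv

theorem admissible_of_pairwise_disjoint (hp : ∀ a, IsDOP d v (p a))
    (hdisj : Pairwise fun a b => Disjoint (DOPset d v (p a)) (DOPset d v (p b)))
    (hH : ∀ a, closure (DOPset d v (p a)) ⊆ {x | ∀ h ∈ H, offset (reindex d v) h.1 x ≤ h.2})
    (a : ι) :
    Admissible d (reindex d v) (others (fun a => reindex d (p a)) a) H (reindex d (p a)) where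
  tight := hv.isDOP_iff.1 (hp a)
  separated := by
    rintro _ ⟨b, hb, rfl⟩
    refine hv.ccwDirections.separated_of_disjoint (hv.isDOP_iff.1 (hp a)) (hv.isDOP_iff.1 (hp b)) ?_
    rw [← hv.DOPset_eq (hp a).2.2.1, ← hv.DOPset_eq (hp b).2.2.1]
    exact hdisj (Ne.symm hb)
  le_wall h hh := by
    have hcorner := (hv.isDOP_iff.1 (hp a)).corner_mem h.1
    rw [← hv.closure_DOPset (hp a).2.2.1 (hp a).1] at hcorner
    exact (hv.ccwDirections.offset_corner _ h.1).symm.trans_le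
      ((hH a hcorner : ∀ h ∈ H, _) h hh)

variable (hp : ∀ a, Admissible d (reindex d v) (others (fun a => reindex d (p a)) a) H
  (reindex d (p a)))
include hp

theorem disjoint_DOPset_closure {a b : ι} (hab : a ≠ b) :
    Disjoint (DOPset d v (p a)) (closure (DOPset d v (p b))) := by
  have hDOP a := hv.isDOP_iff.2 (hp a).tight
  rw [hv.DOPset_eq (hDOP a).2.2.1, hv.closure_DOPset (hDOP b).2.2.1 (hDOP b).1]
  exact ((hp a).separated _ ⟨b, hab.symm, rfl⟩).disjoint hv.ccwDirections

theorem pairwise_disjoint_DOPset :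
    Pairwise fun a b => Disjoint (DOPset d v (p a)) (DOPset d v (p b)) :=
  fun _ _ hab => (disjoint_DOPset_closure hv hp hab).mono_right subset_closure

theorem mem_frontier_DOPset {a b : ι} (hab : a ≠ b) {x : Pt}
    (ha : x ∈ closure (DOPset d v (p a))) (hb : x ∈ closure (DOPset d v (p b))) :
    x ∈ frontier (DOPset d v (p b)) :=
  ⟨hb, fun h => Set.disjoint_left.1 (disjoint_DOPset_closure hv hp hab.symm)
    (interior_subset h) ha⟩

theorem e4cond_range
    (hblocked : ∀ a i, Nondeg (reindex d v) (reindex d (p a)) i →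
      Blocked d (reindex d v) (others (fun a => reindex d (p a)) a) H (reindex d (p a)) i) :
    E4cond d v (Set.range p) {x | ∀ h ∈ H, offset (reindex d v) h.1 x ≤ h.2} := by
  have hw := hv.ccwDirections
  have hDOP a : IsDOP d v (p a) := hv.isDOP_iff.2 (hp a).tight
  have hcl a := hv.closure_DOPset (hDOP a).2.2.1 (hDOP a).1
  rintro _ ⟨a, rfl⟩ i - hne
  rw [IsDOP.tlPt_eq hv (hDOP a), IsDOP.hdPt_eq hv (hDOP a)] at hne
  have hrelint := IsDOP.edgeInterior_subset_relintE hv (hDOP a) i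
  have hclosed := (hp a).tight.edgeInterior_subset_closedPoly hw (ccwIndex d i)
  rcases hblocked a (ccwIndex d i) hne with ⟨_, ⟨b, hb, rfl⟩, x, hx, hxb⟩ | ⟨h, hh, hhi, he⟩
  · refine .inl ⟨p b, ⟨b, rfl⟩, ?_, x, hrelint hx, ?_⟩
    · exact (injective_of_pairwise_disjoint_DOPset (fun a => (hDOP a).1)
        (pairwise_disjoint_DOPset hv hp)).ne hb
    · exact mem_frontier_DOPset hv hp (Ne.symm hb) (hcl a ▸ hclosed hx) (hcl b ▸ hxb)
  · obtain ⟨x, hx⟩ := (hp a).tight.edgeInterior_nonempty hw hne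
    refine .inr ⟨x, hrelint hx, mem_frontier_of_offset_eq hw
      ((hp a).closedPoly_subset (hclosed hx)) hh ?_⟩
    rw [hw.offset_congr hhi, hx.1, ← he, eq_of_modEq (hp a).tight.periodic hhi]

end Family

section GridFamily
variable {d : ℕ} {v : ℤ → Pt} (hv : DirOK d v) {I : Set (ℤ → ℝ)} {p : ℤ → ℝ}
include hv

theorem IsDOP.exists_edgeOf_subset (hp : IsDOP d v p) {M : ℕ}
    (h : ∀ i, IsGridLine d v I M i (reindex d p i)) (i : ℤ) :
    ∃ l ∈ Lgrid d v I M, edgeOf d v p i ⊆ l :=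
  ⟨_, h (ccwIndex d i), fun _ hx => ((hv.mem_edgeOf_iff hp.2.2.1 hp.1).1 hx).2⟩

theorem IsDOP.mem_Vgrid_of_vertexOf (hp : IsDOP d v p) {M : ℕ}
    (h : ∀ i, IsGridLine d v I M i (reindex d p i)) {x : Pt} (hx : VertexOf d v p x) :
    x ∈ Vgrid d v I M := by
  obtain ⟨i, rfl⟩ := (IsDOP.vertexOf_iff hv hp).1 hx
  have hw := hv.ccwDirections
  have hd := hv.1
  refine mem_Vgrid_of_isGridLine hv (not_modEq_of_lt (lt_add_one i) (by omega)) ?_ ?_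
  · rw [hw.offset_corner]; exact h i
  · rw [hw.offset_succ_corner]; exact h (i + 1)

end GridFamily

theorem exists_DOP_extension {d : ℕ} {v : ℤ → Pt} (hv : DirOK d v) {I : Set (ℤ → ℝ)} {K : Set Pt}
    (hK : IsGridRegion d v I K) {ι : Type*} [Finite ι] {p : ι → ℤ → ℝ} (hpI : ∀ a, p a ∈ I)
    (hp : ∀ a, IsDOP d v (p a))
    (hdisj : Pairwise fun a b => Disjoint (DOPset d v (p a)) (DOPset d v (p b)))
    (hpK : ∀ a, closure (DOPset d v (p a)) ⊆ K) :
    ∃ p' : ι → ℤ → ℝ, (∀ a, IsDOP d v (p' a)) ∧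
      (Pairwise fun a b => Disjoint (DOPset d v (p' a)) (DOPset d v (p' b))) ∧
      (∀ a, closure (DOPset d v (p' a)) ⊆ K) ∧
      (∀ a i, IsGridLine d v I (2 * d) i (reindex d (p' a) i)) ∧
      (∀ a, DOPset d v (p a) ⊆ DOPset d v (p' a)) ∧ E4cond d v (Set.range p') K := by
  have hbdd := hK.1
  obtain ⟨H, hHfin, hH, rfl⟩ := hK.exists_walls hv
  have hw := hv.ccwDirections
  obtain ⟨c, hpc, hadm, hblocked, hline⟩ := exists_blocked_extension hw hHfin
    (hw.bddAbove_tightPolygon hbdd) (levelSystem_isGridLine hv hH)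
    (admissible_of_pairwise_disjoint hv hp hdisj hpK)
    (fun a => isGridLine_one_of_mem hv (hp a) (hpI a))
  obtain ⟨p', rfl⟩ : ∃ p' : ι → ℤ → ℝ, c = fun a => reindex d (p' a) :=
    ⟨fun a => reindex d (c a), funext fun a => (reindex_reindex hv.pos (c a)).symm⟩
  have hDOP a : IsDOP d v (p' a) := hv.isDOP_iff.2 (hadm a).tight
  refine ⟨p', hDOP, pairwise_disjoint_DOPset hv hadm, fun a => ?_, hline, fun a => ?_,
    e4cond_range hv hadm hblocked⟩
  · rw [hv.closure_DOPset (hDOP a).2.2.1 (hDOP a).1]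
    exact (hadm a).closedPoly_subset
  · rw [hv.DOPset_eq (hp a).2.2.1, hv.DOPset_eq (hDOP a).2.2.1]
    exact fun x hx i => (hx i).trans_le (hpc a i)

theorem bijOn_extend_coe {α β : Type*} {s : Set α} {f : s → β} (hf : Function.Injective f)
    (g : α → β) : Set.BijOn (Function.extend (↑) f g) s (Set.range f) := by
  have hrestrict : s.domRestrict (Function.extend (↑) f g) = f :=
    funext fun a => Subtype.coe_injective.extend_apply f g a
  have hinj : Set.InjOn (Function.extend (↑) f g) s :=
    Set.injOn_iff_injective.2 (hrestrict.symm ▸ hf)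
  have himage : Function.extend (↑) f g '' s = Set.range f := by
    rw [← Set.range_domRestrict, hrestrict]
  exact himage ▸ hinj.bijOn_image

theorem stmt7_general (d : ℕ) (v : ℤ → Pt) (hv : DirOK d v) (I : Set (ℤ → ℝ)) (Cstar : Set Pt)
    (hC : IsGridRegion d v I Cstar) (OPT : Set (ℤ → ℝ)) (hfin : OPT.Finite) (hOsub : OPT ⊆ I)
    (hDOP : ∀ p ∈ OPT, IsDOP d v p) (hOind : Indep d v OPT)
    (hOin : ∀ p ∈ OPT, closure (DOPset d v p) ⊆ Cstar) :
    ∃ OPT' : Set (ℤ → ℝ), ∃ ext : (ℤ → ℝ) → (ℤ → ℝ),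
      Set.BijOn ext OPT OPT' ∧
      Indep d v OPT' ∧
      (∀ q ∈ OPT', IsDOP d v q) ∧
      (∀ q ∈ OPT', closure (DOPset d v q) ⊆ Cstar) ∧
      (∀ q ∈ OPT', ∀ i ∈ Finset.Icc (1 : ℤ) (2 * (d : ℤ)),
        ∃ l ∈ Lgrid d v I (2 * d), edgeOf d v q i ⊆ l) ∧
      (∀ q ∈ OPT', ∀ x : Pt, VertexOf d v q x → x ∈ Vgrid d v I (2 * d)) ∧
      (∀ p ∈ OPT, DOPset d v p ⊆ DOPset d v (ext p)) ∧
      E4cond d v OPT' Cstar := by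
  have : Finite OPT := hfin
  obtain ⟨p', hDOP', hdisj, hin, hline, hsub, hE4⟩ := exists_DOP_extension hv hC
    (p := ((↑) : OPT → ℤ → ℝ)) (fun a => hOsub a.2) (fun a => hDOP _ a.2)
    (fun a b hab => Set.disjoint_iff_inter_eq_empty.2
      (hOind _ a.2 _ b.2 (Subtype.coe_injective.ne hab)).2) (fun a => hOin _ a.2)
  have hne a := (hDOP' a).1
  have hinj := (injective_of_pairwise_disjoint_DOPset hne hdisj).of_comp (f := DOPset d v)
  refine ⟨Set.range p', Function.extend (↑) p' id, bijOn_extend_coe hinj id,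
    indep_range hne hdisj, Set.forall_mem_range.2 hDOP', Set.forall_mem_range.2 hin,
    Set.forall_mem_range.2 fun a i _ => IsDOP.exists_edgeOf_subset hv (hDOP' a) (hline a) i,
    Set.forall_mem_range.2 fun a _ => IsDOP.mem_Vgrid_of_vertexOf hv (hDOP' a) (hline a),
    fun p hp => ?_, hE4⟩
  exact (hsub ⟨p, hp⟩).trans_eq
    (congrArg _ (Subtype.coe_injective.extend_apply p' id ⟨p, hp⟩).symm)

/-- Existence of a maximal extension: given a finite family `I` of
`d`-DOPs, a bounding closed parallelogram `C*` whose four sides lie on lines of `L₁`,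
and an independent subfamily `OPT ⊆ I` with `cl(P) ⊆ C*` for all `P ∈ OPT`, there are a
family `OPT'` of `d`-DOPs and a bijection `ext : OPT → OPT'` with:
(E1) `OPT'` is independent, `cl(Q) ⊆ C*` for all `Q ∈ OPT'`, every edge of every
`Q ∈ OPT'` lies on a line of `L_{2d}` and every vertex of every `Q ∈ OPT'` is in
`V_{2d}`; (E2) `P ⊆ ext(P)` for all `P ∈ OPT`; (E3) for every `Q ∈ OPT'` and every
non-degenerate edge `e` of `Q`, `relint(e)` meets `∂Q'` for some `Q' ∈ OPT'` with
`Q' ≠ Q`, or `relint(e)` meets `∂C*`. -/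
theorem stmt7 (d : ℕ) (v : ℤ → Pt) (hv : DirOK d v)
    (I : Set (ℤ → ℝ)) (hfin : I.Finite) (hIDOP : ∀ p ∈ I, IsDOP d v p)
    (Cstar : Set Pt)
    (hC : ∃ a u w : Pt, cross2 u w ≠ 0 ∧
      Cstar = (fun st : ℝ × ℝ => a + st.1 • u + st.2 • w) ''
        {st : ℝ × ℝ | st.1 ∈ Set.Icc (0 : ℝ) 1 ∧ st.2 ∈ Set.Icc (0 : ℝ) 1} ∧
      (∃ l ∈ LOne d v I, segment ℝ a (a + u) ⊆ l) ∧
      (∃ l ∈ LOne d v I, segment ℝ (a + w) (a + u + w) ⊆ l) ∧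
      (∃ l ∈ LOne d v I, segment ℝ a (a + w) ⊆ l) ∧
      (∃ l ∈ LOne d v I, segment ℝ (a + u) (a + u + w) ⊆ l))
    (OPT : Set (ℤ → ℝ)) (hOsub : OPT ⊆ I) (hOind : Indep d v OPT)
    (hOin : ∀ p ∈ OPT, closure (DOPset d v p) ⊆ Cstar) :
    ∃ OPT' : Set (ℤ → ℝ), ∃ ext : (ℤ → ℝ) → (ℤ → ℝ),
      Set.BijOn ext OPT OPT' ∧
      -- (E1)
      Indep d v OPT' ∧
      (∀ q ∈ OPT', IsDOP d v q) ∧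
      (∀ q ∈ OPT', closure (DOPset d v q) ⊆ Cstar) ∧
      (∀ q ∈ OPT', ∀ i ∈ Finset.Icc (1 : ℤ) (2 * (d : ℤ)),
        ∃ l ∈ Lgrid d v I (2 * d), edgeOf d v q i ⊆ l) ∧
      (∀ q ∈ OPT', ∀ x : Pt, VertexOf d v q x → x ∈ Vgrid d v I (2 * d)) ∧
      -- (E2)
      (∀ p ∈ OPT, DOPset d v p ⊆ DOPset d v (ext p)) ∧
      -- (E3)
      E4cond d v OPT' Cstar := by
  obtain ⟨a, u, w, h, rfl, h₁, h₂, h₃, h₄⟩ := hC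
  exact stmt7_general d v hv I _ (isGridRegion_parallelogram hv h h₁ h₂ h₃ h₄) OPT
    (hfin.subset hOsub) hOsub (fun p hp => hIDOP p (hOsub hp)) hOind hOin
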